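/- arXiv:1609.02577 — 6 statements merged into one kernel-verified Lean document; each statement's English description precedes it below -/
import Mathlib

section
/- Let C be a compact metrizable topological space, (g_n) a sequence of continuous maps from C to C, λ and ν Borel probability measures on C, and A ⊆ C a Borel set. Assume that for λ-almost every x ∈ C, every cluster point of the sequence (g_n x)_{n∈ℕ} belongs to A, and that the pushforward measures (g_n)_*λ converge to ν in the topology of weak convergence of probability measures. Then ν(closure of A) = 1. -/
/-!
Let `f` be a bounded continuous function vanishing on `A`. For `λ`-a.e. `x`, compactness turns the
hypothesis on cluster points into convergence of `gₙ x` to the set `A`, so `f (gₙ x) → 0`, and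
`∫ f ∘ gₙ dλ → 0` by dominated convergence; weak convergence then gives `∫ f dν = 0`. Applying
this to a sequence of such `f` with values in `[0, 1]`, for which `1 - f` converges pointwise to the
indicator of `closure A`, shows that `ν` is carried by `closure A`.
-/

open MeasureTheory Filter Topology

open scoped BoundedContinuousFunction

section

variable {X : Type*} [TopologicalSpace X] [MeasurableSpace X] [OpensMeasurableSpace X]

theorem ae_mem_closure_of_forall_integral_eq_zero [HasOuterApproxClosed X]
    {ν : Measure X} [IsFiniteMeasure ν] {A : Set X}
    (h : ∀ f : X →ᵇ ℝ, (∀ x ∈ A, f x = 0) → ∫ x, f x ∂ν = 0) :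
    ∀ᵐ x ∂ν, x ∈ closure A := by
  have hF : IsClosed (closure A) := isClosed_closure
  have appr_eq_one (n : ℕ) : ∀ᵐ x ∂ν, hF.apprSeq n x = 1 := by
    let f : X →ᵇ ℝ := 1 - (hF.apprSeq n).comp _ NNReal.isometry_coe.lipschitz
    have f_apply (x : X) : f x = 1 - (hF.apprSeq n x : ℝ) := rfl
    have f_nonneg : 0 ≤ ⇑f := fun x =>
      sub_nonneg.2 (mod_cast HasOuterApproxClosed.apprSeq_apply_le_one hF n x)
    have f_eq_zero : ∀ x ∈ A, f x = 0 := fun x hx => by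
      simp [f_apply, HasOuterApproxClosed.apprSeq_apply_eq_one hF n (subset_closure hx)]
    filter_upwards [(integral_eq_zero_iff_of_nonneg f_nonneg (f.integrable ν)).1 (h f f_eq_zero)]
      with x hx
    rw [f_apply, Pi.zero_apply, sub_eq_zero] at hx
    exact_mod_cast hx.symm
  filter_upwards [ae_all_iff.2 appr_eq_one] with x hx
  have indicator_eq_one : (closure A).indicator (fun _ => (1 : NNReal)) x = 1 :=
    tendsto_nhds_unique (tendsto_pi_nhds.1 (HasOuterApproxClosed.tendsto_apprSeq hF) x)
      (by simp only [hx, tendsto_const_nhds])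
  exact Set.mem_of_indicator_ne_zero (indicator_eq_one.trans_ne one_ne_zero)

variable {Ω ι : Type*} [MeasurableSpace Ω] {μ : Measure Ω} [IsFiniteMeasure μ]
  {l : Filter ι} [l.IsCountablyGenerated] {g : ι → Ω → X} {A : Set X}

theorem tendsto_integral_comp_of_ae_tendsto_nhdsSet
    {E : Type*} [NormedAddCommGroup E] [NormedSpace ℝ E] [CompleteSpace E]
    [SecondCountableTopologyEither X E]
    (hg : ∀ i, AEMeasurable (g i) μ) (hlim : ∀ᵐ ω ∂μ, Tendsto (fun i => g i ω) l (𝓝ˢ A))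
    (f : X →ᵇ E) {c : E} (hf : ∀ x ∈ A, f x = c) :
    Tendsto (fun i => ∫ ω, f (g i ω) ∂μ) l (𝓝 (μ.real Set.univ • c)) := by
  rw [← integral_const]
  refine tendsto_integral_filter_of_dominated_convergence (fun _ => ‖f‖)
    (.of_forall fun i => f.continuous.aestronglyMeasurable.comp_aemeasurable (hg i))
    (.of_forall fun i => .of_forall fun ω => f.norm_coe_le_norm (g i ω)) (integrable_const _) ?_
  filter_upwards [hlim] with ω hω
  exact (f.continuous.tendsto_nhdsSet_nhds hf).comp hω

variable [HasOuterApproxClosed X] [l.NeBot] {ν : Measure X} [IsFiniteMeasure ν]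

theorem ae_mem_closure_of_ae_tendsto_nhdsSet
    (hg : ∀ i, AEMeasurable (g i) μ) (hlim : ∀ᵐ ω ∂μ, Tendsto (fun i => g i ω) l (𝓝ˢ A))
    (hconv : ∀ f : X →ᵇ ℝ,
      Tendsto (fun i => ∫ ω, f (g i ω) ∂μ) l (𝓝 (∫ x, f x ∂ν))) :
    ∀ᵐ x ∂ν, x ∈ closure A :=
  ae_mem_closure_of_forall_integral_eq_zero fun f hf =>
    tendsto_nhds_unique (hconv f) <| by
      simpa only [smul_zero] using
        tendsto_integral_comp_of_ae_tendsto_nhdsSet hg hlim f (c := 0) hf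

theorem weak_limit_supported_on_closure_general
    (hg : ∀ i, AEMeasurable (g i) μ)
    (hcompact : ∀ᵐ ω ∂μ, ∃ K : Set X, IsCompact K ∧ ∀ᶠ i in l, g i ω ∈ K)
    (hcluster : ∀ᵐ ω ∂μ, ∀ x : X, MapClusterPt x l (fun i => g i ω) → x ∈ A)
    (hconv : ∀ f : X →ᵇ ℝ,
      Tendsto (fun i => ∫ ω, f (g i ω) ∂μ) l (𝓝 (∫ x, f x ∂ν))) :
    ∀ᵐ x ∂ν, x ∈ closure A := by
  refine ae_mem_closure_of_ae_tendsto_nhdsSet hg ?_ hconv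
  filter_upwards [hcompact, hcluster] with ω ⟨K, hK, hgK⟩ hA
  exact hK.tendsto_nhdsSet_of_mapClusterPt hgK fun x _ => hA x

end

/-- If for `λ`-a.e. `x` every cluster point of `(gₙ x)` lies in `A`, and the
pushforwards `(gₙ)_* λ` converge weakly to `ν`, then `ν (closure A) = 1`. -/
theorem weak_limit_supported_on_closure
    {C : Type*} [TopologicalSpace C] [CompactSpace C] [TopologicalSpace.MetrizableSpace C]
    [MeasurableSpace C] [BorelSpace C]
    (g : ℕ → C → C) (hg : ∀ n, Continuous (g n))
    (lam ν : Measure C) [IsProbabilityMeasure lam] [IsProbabilityMeasure ν]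
    (A : Set C) (hA : MeasurableSet A)
    (hcluster : ∀ᵐ x ∂lam, ∀ y : C, MapClusterPt y atTop (fun n => g n x) → y ∈ A)
    (hconv : ∀ f : BoundedContinuousFunction C ℝ,
      Tendsto (fun n => ∫ x, f (g n x) ∂lam) atTop (𝓝 (∫ x, f x ∂ν))) :
    ν (closure A) = 1 :=
  (mem_ae_iff_prob_eq_one isClosed_closure.measurableSet).1 <|
    weak_limit_supported_on_closure_general (fun n => (hg n).measurable.aemeasurable)
      (.of_forall fun _ => ⟨Set.univ, isCompact_univ, by simp⟩) hcluster hconv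
end

section
/- Let G be a countable discrete group acting on a compact metrizable space Y by homeomorphisms, μ a probability measure on G, and ν a Borel probability measure on Y that is μ̌-stationary, i.e. ν(A) = ∑_{g∈G} μ({g})·ν(g•A) for every Borel set A ⊆ Y. Assume moreover that ν is the unique μ̌-stationary Borel probability measure on Y. Let Ω = G^ℕ carry the infinite product measure ℙ = μ^⊗ℕ, and define T : Ω × Y → Ω × Y by T(ω, y) = (Sω, (ω 0)⁻¹ • y), where S is the shift (Sω)(n) = ω(n+1). Then T is ergodic with respect to ℙ ⊗ ν: every measurable set E ⊆ Ω × Y with T⁻¹(E) = E satisfies (ℙ ⊗ ν)(E) = 0 or (ℙ ⊗ ν)(E) = 1. -/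
/-!
Let `φ y = ℙ {ω | (ω, y) ∈ E}` be the measure of the fibre over `y` of an invariant set `E`. Since
`ω 0` is independent of the shifted sequence, invariance makes `φ` harmonic: `φ y` is the average
of `φ (g⁻¹ • y)` over `g`. Stationarity of `ν` says that `g⁻¹ • y` has law `ν` under `μ ⊗ ν`, so the
integral of `(φ (g⁻¹ • y) - φ y) ^ 2` expands to zero and `φ (g⁻¹ • y) = φ y` almost everywhere.
Then `φ ν` is stationary up to normalisation, and uniqueness makes `φ` almost everywhere equal to a
constant `c`.

Peeling off one letter at a time upgrades this to `ℙ {ω ∈ C | (ω, y) ∈ E} = c * ℙ C` for every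
cylinder `C` and almost every `y`. So `E` is independent of every rectangle, hence of every
measurable set, in particular of its own complement, and `c * (1 - c) = 0`.
-/

open MeasureTheory Filter Topology
open scoped Pointwise

open scoped ENNReal

section SquareIntegrable

variable {α X Y : Type*} [MeasurableSpace α] [MeasurableSpace X] [MeasurableSpace Y]

lemma ae_eq_of_integral_mul_self_eq_integral_mul {m : Measure α} {u v : α → ℝ}
    (hu : MemLp u 2 m) (hv : MemLp v 2 m)
    (huu : ∫ a, u a * u a ∂m = ∫ a, u a * v a ∂m) (hvv : ∫ a, v a * v a ∂m = ∫ a, u a * v a ∂m) :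
    u =ᵐ[m] v := by
  have int_uu : Integrable (fun a => u a * u a) m := hu.integrable_mul hu
  have int_uv : Integrable (fun a => u a * v a) m := hu.integrable_mul hv
  have int_vv : Integrable (fun a => v a * v a) m := hv.integrable_mul hv
  have integral_sq : ∫ a, (u a - v a) ^ 2 ∂m = 0 := calc
    _ = ∫ a, (u a * u a - u a * v a) - (u a * v a - v a * v a) ∂m := by
      congr with a
      ring
    _ = (∫ a, u a * u a ∂m - ∫ a, u a * v a ∂m) - (∫ a, u a * v a ∂m - ∫ a, v a * v a ∂m) := by
      rw [← integral_sub int_uu int_uv, ← integral_sub int_uv int_vv]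
      exact integral_sub (int_uu.sub int_uv) (int_uv.sub int_vv)
    _ = 0 := by rw [huu, hvv, sub_self]
  have sq_eq_zero := (integral_eq_zero_iff_of_nonneg (fun a => sq_nonneg (u a - v a))
    (hu.sub hv).integrable_sq).1 integral_sq
  filter_upwards [sq_eq_zero] with a ha
  exact sub_eq_zero.1 (pow_eq_zero_iff two_ne_zero |>.1 ha)

lemma ae_comp_eq_of_harmonic {μ : Measure X} [IsProbabilityMeasure μ] {ν : Measure Y} [SFinite ν]
    {f : X × Y → Y} (hf : MeasurePreserving f (μ.prod ν) ν) {ψ : Y → ℝ} (hψ : MemLp ψ 2 ν)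
    (harmonic : ∀ᵐ y ∂ν, ∫ x, ψ (f (x, y)) ∂μ = ψ y) :
    ∀ᵐ p ∂μ.prod ν, ψ (f p) = ψ p.2 := by
  have memLp_comp : MemLp (fun p => ψ (f p)) 2 (μ.prod ν) := hψ.comp_measurePreserving hf
  have memLp_snd : MemLp (fun p : X × Y => ψ p.2) 2 (μ.prod ν) := hψ.comp_snd μ
  have integral_comp : ∫ p, ψ (f p) * ψ (f p) ∂μ.prod ν = ∫ y, ψ y * ψ y ∂ν := by
    conv_rhs => rw [← hf.map_eq]
    exact (integral_map hf.aemeasurable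
      (hf.map_eq.symm ▸ hψ.1.mul hψ.1 : AEStronglyMeasurable (fun y => ψ y * ψ y) _)).symm
  have integral_snd : ∫ p : X × Y, ψ p.2 * ψ p.2 ∂μ.prod ν = ∫ y, ψ y * ψ y ∂ν := by
    rw [integral_fun_snd fun y => ψ y * ψ y, probReal_univ, one_smul]
  have integral_cross : ∫ p, ψ (f p) * ψ p.2 ∂μ.prod ν = ∫ y, ψ y * ψ y ∂ν := by
    refine (integral_prod_symm _ (memLp_comp.integrable_mul memLp_snd)).trans
      (integral_congr_ae ?_)
    filter_upwards [harmonic] with y hy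
    simp only [Pi.mul_apply]
    rw [integral_mul_const, hy]
  exact ae_eq_of_integral_mul_self_eq_integral_mul memLp_comp memLp_snd
    (integral_comp.trans integral_cross.symm) (integral_snd.trans integral_cross.symm)

end SquareIntegrable

section InvariantDensity

variable {X Y : Type*} [MeasurableSpace X] [MeasurableSpace Y]
  {μ : Measure X} {ν : Measure Y} {f : X × Y → Y}

lemma measurePreserving_withDensity_of_ae_comp_eq [SFinite ν]
    (hf : MeasurePreserving f (μ.prod ν) ν) {φ : Y → ℝ≥0∞} (hφ : Measurable φ)
    (invariant : ∀ᵐ p ∂μ.prod ν, φ (f p) = φ p.2) :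
    MeasurePreserving f (μ.prod (ν.withDensity φ)) (ν.withDensity φ) := by
  refine ⟨hf.measurable, Measure.ext fun A hA => ?_⟩
  calc (μ.prod (ν.withDensity φ)).map f A = ∫⁻ p in f ⁻¹' A, φ p.2 ∂μ.prod ν := by
        rw [Measure.map_apply hf.measurable hA, prod_withDensity_right hφ,
          withDensity_apply _ (hf.measurable hA)]
    _ = ∫⁻ p in f ⁻¹' A, φ (f p) ∂μ.prod ν :=
        lintegral_congr_ae (ae_restrict_of_ae (invariant.mono fun _ hp => hp.symm))
    _ = ν.withDensity φ A := by
        rw [hf.setLIntegral_comp_preimage hA hφ, withDensity_apply _ hA]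

lemma ae_eq_lintegral_of_ae_comp_eq [SigmaFinite ν] (hf : MeasurePreserving f (μ.prod ν) ν)
    (unique : ∀ ν' : Measure Y, IsProbabilityMeasure ν' → ν' ≪ ν →
      MeasurePreserving f (μ.prod ν') ν' → ν' = ν)
    {φ : Y → ℝ≥0∞} (hφ : Measurable φ) (integral_ne_top : ∫⁻ y, φ y ∂ν ≠ ∞)
    (invariant : ∀ᵐ p ∂μ.prod ν, φ (f p) = φ p.2) :
    ∀ᵐ y ∂ν, φ y = ∫⁻ y, φ y ∂ν := by
  set c := ∫⁻ y, φ y ∂ν with hc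
  obtain integral_eq_zero | integral_ne_zero := eq_or_ne c 0
  · rw [integral_eq_zero]
    exact (lintegral_eq_zero_iff hφ).1 integral_eq_zero
  have measurable_density : Measurable fun y => φ y * c⁻¹ := hφ.mul_const _
  have isProbabilityMeasure : IsProbabilityMeasure (ν.withDensity fun y => φ y * c⁻¹) := by
    refine ⟨?_⟩
    rw [withDensity_apply _ .univ, Measure.restrict_univ, lintegral_mul_const _ hφ, ← hc,
      ENNReal.mul_inv_cancel integral_ne_zero integral_ne_top]
  have withDensity_eq : ν.withDensity (fun y => φ y * c⁻¹) = ν.withDensity 1 := by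
    rw [withDensity_one]
    refine unique _ isProbabilityMeasure (withDensity_absolutelyContinuous _ _)
      (measurePreserving_withDensity_of_ae_comp_eq hf measurable_density ?_)
    filter_upwards [invariant] with p hp
    rw [hp]
  have density_eq_one := (withDensity_eq_iff_of_sigmaFinite measurable_density.aemeasurable
    aemeasurable_one).1 withDensity_eq
  filter_upwards [density_eq_one] with y hy
  simpa only [inv_inv] using ENNReal.eq_inv_of_mul_eq_one_left hy

end InvariantDensity

/-- The law of a sequence of independent random variables of law `μ`, a probability measure. -/
noncomputable abbrev iidLaw {X : Type*} [MeasurableSpace X] (μ : Measure X) : Measure (ℕ → X) :=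
  Measure.infinitePi fun _ => μ

/-- The skew product over the one-sided shift in which the first letter `ω 0` moves `y` to
`f (ω 0, y)`. The transformation attached to a group action is the case `f (g, y) = g⁻¹ • y`. -/
def skewShift {X Y : Type*} (f : X × Y → Y) (p : (ℕ → X) × Y) : (ℕ → X) × Y :=
  (fun n => p.1 (n + 1), f (p.1 0, p.2))

section Cylinder

variable {X Y : Type*}

lemma tail_head_preimage_pi_Iio_prod (n : ℕ) (B : ℕ → Set X) (A : Set X) :
    (fun ω : ℕ → X => (fun i => ω (i + 1), ω 0)) ⁻¹' ((Set.Iio n).pi B ×ˢ A) =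
      (Set.Iio (n + 1)).pi fun i => Nat.casesOn i A B := by
  ext ω
  exact and_comm.trans
    (Nat.forall_lt_succ_left (p := fun i => ω i ∈ (Nat.casesOn i A B : Set X))).symm

variable [MeasurableSpace X] [MeasurableSpace Y]

lemma exists_eq_pi_Iio_of_mem_squareCylinders {S : Set (ℕ → X)}
    (hS : S ∈ squareCylinders fun _ => {B : Set X | MeasurableSet B}) :
    ∃ (n : ℕ) (B : ℕ → Set X), (∀ i, MeasurableSet (B i)) ∧ S = (Set.Iio n).pi B := by
  classical
  obtain ⟨s, B, hB, rfl⟩ := hS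
  refine ⟨s.sup id + 1, s.piecewise B fun _ => Set.univ, fun i => ?_, ?_⟩
  · by_cases hi : i ∈ s
    · simpa [hi] using hB i trivial
    · simp [hi]
  · ext ω
    have lt_of_mem : ∀ i ∈ s, i < s.sup id + 1 := fun i hi =>
      Nat.lt_succ_of_le (Finset.le_sup (f := id) hi)
    refine forall_congr' fun i => ?_
    by_cases hi : i ∈ s
    · simp [hi, lt_of_mem i hi]
    · simp [hi]

lemma measure_prod_eq_of_forall_pi_Iio {m : Measure (ℕ → X)} [IsFiniteMeasure m]
    {ν : Measure Y} [SigmaFinite ν] {ρ : Measure ((ℕ → X) × Y)}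
    (h : ∀ (n : ℕ) (B : ℕ → Set X) (A : Set Y), (∀ i, MeasurableSet (B i)) → MeasurableSet A →
      ρ ((Set.Iio n).pi B ×ˢ A) = m ((Set.Iio n).pi B) * ν A) :
    m.prod ν = ρ := by
  refine Measure.prod_eq_generateFrom generateFrom_squareCylinders
    MeasurableSpace.generateFrom_measurableSet
    (isPiSystem_squareCylinders (fun _ => MeasurableSpace.isPiSystem_measurableSet)
      fun _ => MeasurableSet.univ)
    MeasurableSpace.isPiSystem_measurableSet
    ⟨fun _ => Set.univ, fun _ => ⟨∅, fun _ => Set.univ, fun _ _ => MeasurableSet.univ, by simp⟩,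
      fun _ => measure_lt_top _ _, Set.iUnion_const _⟩
    ν.toFiniteSpanningSetsIn fun S hS A hA => ?_
  obtain ⟨n, B, hB, rfl⟩ := exists_eq_pi_Iio_of_mem_squareCylinders hS
  exact h n B A hB hA

variable (μ : Measure X) [IsProbabilityMeasure μ]

lemma iidLaw_pi_Iio (n : ℕ) {B : ℕ → Set X} (hB : ∀ i, MeasurableSet (B i)) :
    iidLaw μ ((Set.Iio n).pi B) = ∏ i ∈ Finset.range n, μ (B i) := by
  rw [← Finset.coe_range, Measure.infinitePi_pi _ fun i _ => hB i]

lemma iidLaw_pi_Iio_succ (n : ℕ) {B : ℕ → Set X} (hB : ∀ i, MeasurableSet (B i)) :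
    iidLaw μ ((Set.Iio (n + 1)).pi B) =
      iidLaw μ ((Set.Iio n).pi fun i => B (i + 1)) * μ (B 0) := by
  rw [iidLaw_pi_Iio μ _ hB, iidLaw_pi_Iio μ _ fun i => hB (i + 1), Finset.prod_range_succ']

lemma measurePreserving_tail_head :
    MeasurePreserving (fun ω : ℕ → X => (fun n => ω (n + 1), ω 0))
      (iidLaw μ) ((iidLaw μ).prod μ) := by
  have measurable : Measurable fun ω : ℕ → X => (fun n => ω (n + 1), ω 0) := by fun_prop
  refine ⟨measurable, (measure_prod_eq_of_forall_pi_Iio fun n B A hB hA => ?_).symm⟩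
  have measurable_cases : ∀ i, MeasurableSet (Nat.casesOn i A B : Set X) := by
    rintro (_ | i)
    exacts [hA, hB i]
  have measurable_box := (MeasurableSet.pi (Set.to_countable (Set.Iio n)) fun i _ => hB i).prod hA
  rw [Measure.map_apply measurable measurable_box, tail_head_preimage_pi_Iio_prod,
    iidLaw_pi_Iio_succ μ n measurable_cases]
  rfl

end Cylinder

section SkewShift

variable {X Y : Type*} [MeasurableSpace X] [MeasurableSpace Y]
  {μ : Measure X} [IsProbabilityMeasure μ] {ν : Measure Y} {f : X × Y → Y}
  {E : Set ((ℕ → X) × Y)}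

lemma measurable_skewShift (hf : Measurable f) : Measurable (skewShift f) := by
  unfold skewShift
  fun_prop

lemma iidLaw_head_mem_skewShift_mem (hf : Measurable f) (hE : MeasurableSet E) {B : Set X}
    (hB : MeasurableSet B) (y : Y) :
    iidLaw μ {ω | ω 0 ∈ B ∧ skewShift f (ω, y) ∈ E} =
      ∫⁻ x in B, iidLaw μ ((·, f (x, y)) ⁻¹' E) ∂μ := by
  set D : Set ((ℕ → X) × X) := {p | p.2 ∈ B ∧ (p.1, f (p.2, y)) ∈ E}
  have measurableSet_D : MeasurableSet D :=
    (measurable_snd hB).inter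
      ((by fun_prop : Measurable fun p : (ℕ → X) × X => (p.1, f (p.2, y))) hE)
  have section_D (x : X) : iidLaw μ ((·, x) ⁻¹' D) =
      B.indicator (fun x => iidLaw μ ((·, f (x, y)) ⁻¹' E)) x := by
    by_cases hx : x ∈ B
    · simp only [D, Set.preimage_ofPred_eq, hx, true_and, Set.indicator_of_mem]
      rfl
    · simp [D, hx]
  calc iidLaw μ {ω | ω 0 ∈ B ∧ skewShift f (ω, y) ∈ E}
      = (iidLaw μ).prod μ D :=
        (measurePreserving_tail_head μ).measure_preimage measurableSet_D.nullMeasurableSet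
    _ = ∫⁻ x in B, iidLaw μ ((·, f (x, y)) ⁻¹' E) ∂μ := by
        rw [Measure.prod_apply_symm measurableSet_D, ← lintegral_indicator hB]
        exact lintegral_congr section_D

lemma iidLaw_skewShift_mem (hf : Measurable f) (hE : MeasurableSet E) (y : Y) :
    iidLaw μ {ω | skewShift f (ω, y) ∈ E} = ∫⁻ x, iidLaw μ ((·, f (x, y)) ⁻¹' E) ∂μ := by
  simpa using iidLaw_head_mem_skewShift_mem (μ := μ) hf hE .univ y

lemma measurePreserving_skewShift [SFinite ν] (hf : MeasurePreserving f (μ.prod ν) ν) :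
    MeasurePreserving (skewShift f) ((iidLaw μ).prod ν) ((iidLaw μ).prod ν) := by
  have measurable_skew := measurable_skewShift hf.measurable
  refine ⟨measurable_skew, Measure.ext fun E hE => ?_⟩
  have measurable_fibre : Measurable fun y => iidLaw μ ((·, y) ⁻¹' E) :=
    measurable_measure_prodMk_right hE
  calc ((iidLaw μ).prod ν).map (skewShift f) E
      = ∫⁻ y, iidLaw μ {ω | skewShift f (ω, y) ∈ E} ∂ν := by
        rw [Measure.map_apply measurable_skew hE, Measure.prod_apply_symm (measurable_skew hE)]
        rfl
    _ = ∫⁻ y, ∫⁻ x, iidLaw μ ((·, f (x, y)) ⁻¹' E) ∂μ ∂ν :=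
        lintegral_congr (iidLaw_skewShift_mem hf.measurable hE)
    _ = ∫⁻ p, iidLaw μ ((·, f p) ⁻¹' E) ∂μ.prod ν :=
        (lintegral_prod_symm _ (measurable_fibre.comp hf.measurable).aemeasurable).symm
    _ = (iidLaw μ).prod ν E := by
        rw [hf.lintegral_comp measurable_fibre, Measure.prod_apply_symm hE]

lemma ae_iidLaw_fibre_comp_eq [IsFiniteMeasure ν] (hf : MeasurePreserving f (μ.prod ν) ν)
    (hE : MeasurableSet E) (invariant : skewShift f ⁻¹' E = E) :
    ∀ᵐ p ∂μ.prod ν, iidLaw μ ((·, f p) ⁻¹' E) = iidLaw μ ((·, p.2) ⁻¹' E) := by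
  have measurable_fibre : Measurable fun y => iidLaw μ ((·, y) ⁻¹' E) :=
    measurable_measure_prodMk_right hE
  have memLp_fibre : MemLp (fun y => (iidLaw μ).real ((·, y) ⁻¹' E)) 2 ν :=
    .of_bound measurable_fibre.ennreal_toReal.aestronglyMeasurable 1 (ae_of_all _ fun y => by
      rw [Real.norm_of_nonneg measureReal_nonneg]
      exact measureReal_le_one)
  have harmonic (y : Y) :
      ∫ x, (iidLaw μ).real ((·, f (x, y)) ⁻¹' E) ∂μ = (iidLaw μ).real ((·, y) ⁻¹' E) := by
    have measurable_move : Measurable fun x => iidLaw μ ((·, f (x, y)) ⁻¹' E) :=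
      measurable_fibre.comp (hf.measurable.comp measurable_prodMk_right)
    simp only [Measure.real]
    rw [integral_toReal measurable_move.aemeasurable (ae_of_all _ fun x => measure_lt_top _ _),
      ← iidLaw_skewShift_mem hf.measurable hE]
    congr 2
    exact congrArg ((·, y) ⁻¹' ·) invariant
  filter_upwards [ae_comp_eq_of_harmonic hf memLp_fibre (ae_of_all _ harmonic)] with p hp
  exact (measureReal_eq_measureReal_iff).1 hp

lemma ae_iidLaw_fibre_inter_pi_Iio [SFinite ν] (hf : MeasurePreserving f (μ.prod ν) ν)
    (hE : MeasurableSet E) (invariant : skewShift f ⁻¹' E = E) {c : ℝ≥0∞}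
    (fibre_eq : ∀ᵐ y ∂ν, iidLaw μ ((·, y) ⁻¹' E) = c) (n : ℕ) {B : ℕ → Set X}
    (hB : ∀ i, MeasurableSet (B i)) :
    ∀ᵐ y ∂ν, iidLaw μ ((·, y) ⁻¹' E ∩ (Set.Iio n).pi B) = c * iidLaw μ ((Set.Iio n).pi B) := by
  induction n generalizing B with
  | zero => simpa using fibre_eq
  | succ n ih =>
    set C := (Set.Iio n).pi fun i => B (i + 1)
    have measurableSet_C : MeasurableSet C :=
      .pi (Set.to_countable _) fun i _ => hB (i + 1)
    have ae_next : ∀ᵐ y ∂ν, ∀ᵐ x ∂μ,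
        iidLaw μ ((·, f (x, y)) ⁻¹' E ∩ C) = c * iidLaw μ C :=
      Measure.ae_ae_of_ae_prod <| Measure.measurePreserving_swap.quasiMeasurePreserving.ae <|
        hf.quasiMeasurePreserving.ae (ih fun i => hB (i + 1))
    filter_upwards [ae_next] with y hy
    have peel : (·, y) ⁻¹' E ∩ (Set.Iio (n + 1)).pi B =
        {ω | ω 0 ∈ B 0 ∧ skewShift f (ω, y) ∈ E ∩ Prod.fst ⁻¹' C} := by
      ext ω
      have mem_E : (ω, y) ∈ E ↔ skewShift f (ω, y) ∈ E := (Set.ext_iff.1 invariant (ω, y)).symm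
      have mem_box : ω ∈ (Set.Iio (n + 1)).pi B ↔ ω 0 ∈ B 0 ∧ (skewShift f (ω, y)).1 ∈ C :=
        Nat.forall_lt_succ_left (p := fun i => ω i ∈ B i)
      exact (and_congr mem_E mem_box).trans and_left_comm
    calc iidLaw μ ((·, y) ⁻¹' E ∩ (Set.Iio (n + 1)).pi B)
        = ∫⁻ x in B 0, iidLaw μ ((·, f (x, y)) ⁻¹' E ∩ C) ∂μ := by
          rw [peel, iidLaw_head_mem_skewShift_mem hf.measurable
            (hE.inter (measurable_fst measurableSet_C)) (hB 0)]
          rfl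
      _ = ∫⁻ _ in B 0, c * iidLaw μ C ∂μ := lintegral_congr_ae (ae_restrict_of_ae hy)
      _ = c * iidLaw μ ((Set.Iio (n + 1)).pi B) := by
          rw [setLIntegral_const, iidLaw_pi_Iio_succ μ n hB, mul_assoc]

lemma restrict_prod_eq_smul_of_ae_fibre_eq [SigmaFinite ν]
    (hf : MeasurePreserving f (μ.prod ν) ν) (hE : MeasurableSet E)
    (invariant : skewShift f ⁻¹' E = E) {c : ℝ≥0∞} (hc : c ≠ ∞)
    (fibre_eq : ∀ᵐ y ∂ν, iidLaw μ ((·, y) ⁻¹' E) = c) :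
    ((iidLaw μ).prod ν).restrict E = c • (iidLaw μ).prod ν := by
  have isFiniteMeasure_smul : IsFiniteMeasure (c • iidLaw μ) := Measure.smul_finite _ hc
  rw [← Measure.prod_smul_left]
  refine (measure_prod_eq_of_forall_pi_Iio fun n B A hB hA => ?_).symm
  set C := (Set.Iio n).pi B
  have measurableSet_C : MeasurableSet C := .pi (Set.to_countable _) fun i _ => hB i
  have measurableSet_box : MeasurableSet (C ×ˢ A) := measurableSet_C.prod hA
  have ae_section : ∀ᵐ y ∂ν, iidLaw μ ((·, y) ⁻¹' (C ×ˢ A ∩ E)) =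
      A.indicator (fun _ => c * iidLaw μ C) y := by
    filter_upwards [ae_iidLaw_fibre_inter_pi_Iio hf hE invariant fibre_eq n hB] with y hy
    by_cases hyA : y ∈ A
    · simpa [hyA, Set.inter_comm] using hy
    · simp [hyA]
  rw [Measure.restrict_apply measurableSet_box,
    Measure.prod_apply_symm (measurableSet_box.inter hE), lintegral_congr_ae ae_section,
    lintegral_indicator_const hA, Measure.smul_apply, smul_eq_mul]

theorem ergodic_skewShift [IsProbabilityMeasure ν] (hf : MeasurePreserving f (μ.prod ν) ν)
    (unique : ∀ ν' : Measure Y, IsProbabilityMeasure ν' → ν' ≪ ν →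
      MeasurePreserving f (μ.prod ν') ν' → ν' = ν) :
    Ergodic (skewShift f) ((iidLaw μ).prod ν) := by
  refine ⟨measurePreserving_skewShift hf, ⟨fun E hE invariant => ?_⟩⟩
  have fibre_eq : ∀ᵐ y ∂ν, iidLaw μ ((·, y) ⁻¹' E) = (iidLaw μ).prod ν E := by
    have measure_eq := Measure.prod_apply_symm (μ := iidLaw μ) (ν := ν) hE
    rw [measure_eq]
    exact ae_eq_lintegral_of_ae_comp_eq hf unique (measurable_measure_prodMk_right hE)
      (measure_eq ▸ measure_ne_top _ _) (ae_iidLaw_fibre_comp_eq hf hE invariant)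
  have restrict_eq := restrict_prod_eq_smul_of_ae_fibre_eq hf hE invariant
    (measure_ne_top _ _) fibre_eq
  have measure_mul_compl : (iidLaw μ).prod ν E * (iidLaw μ).prod ν Eᶜ = 0 := by
    rw [← smul_eq_mul, ← Measure.smul_apply, ← restrict_eq, Measure.restrict_apply hE.compl,
      Set.compl_inter_self, measure_empty]
  rw [eventuallyConst_set']
  exact (mul_eq_zero.1 measure_mul_compl).imp ae_eq_empty.2 ae_eq_univ.2

end SkewShift

section Action

variable {G Y : Type*} [Group G] [Countable G] [MeasurableSpace G] [MeasurableSingletonClass G]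
  [MeasurableSpace Y] [MulAction G Y]

lemma measurePreserving_inv_smul_iff (hact : ∀ g : G, Measurable fun y : Y => g • y)
    (μ : Measure G) (ν : Measure Y) [SFinite ν] :
    MeasurePreserving (fun p : G × Y => p.1⁻¹ • p.2) (μ.prod ν) ν ↔
      ∀ A : Set Y, MeasurableSet A → ν A = ∑' g : G, μ {g} * ν (g • A) := by
  have measurable_move : Measurable fun p : G × Y => p.1⁻¹ • p.2 :=
    measurable_from_prod_countable_right fun g => hact g⁻¹
  have map_apply {A : Set Y} (hA : MeasurableSet A) :
      (μ.prod ν).map (fun p : G × Y => p.1⁻¹ • p.2) A = ∑' g : G, μ {g} * ν (g • A) := by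
    rw [Measure.map_apply measurable_move hA, Measure.prod_apply (measurable_move hA),
      lintegral_countable']
    refine tsum_congr fun g => ?_
    rw [mul_comm, ← Set.preimage_smul_inv]
    rfl
  constructor
  · intro preserving A hA
    rw [← map_apply hA, preserving.map_eq]
  · intro stationary
    exact ⟨measurable_move, Measure.ext fun A hA => by rw [map_apply hA, stationary A hA]⟩

theorem skew_shift_ergodic_general (hact : ∀ g : G, Measurable fun y : Y => g • y)
    (μ : Measure G) [IsProbabilityMeasure μ] (ν : Measure Y) [IsProbabilityMeasure ν]
    (hstat : ∀ A : Set Y, MeasurableSet A → ν A = ∑' g : G, μ {g} * ν (g • A))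
    (huniq : ∀ ν' : Measure Y, IsProbabilityMeasure ν' → ν' ≪ ν →
      (∀ A : Set Y, MeasurableSet A → ν' A = ∑' g : G, μ {g} * ν' (g • A)) → ν' = ν)
    (ℙ : Measure (ℕ → G))
    (hℙ : ∀ (s : Finset ℕ) (B : ℕ → Set G), ℙ {ω | ∀ i ∈ s, ω i ∈ B i} = ∏ i ∈ s, μ (B i)) :
    Ergodic (fun p : (ℕ → G) × Y => ((fun n => p.1 (n + 1)), (p.1 0)⁻¹ • p.2)) (ℙ.prod ν) := by
  obtain rfl : ℙ = iidLaw μ := Measure.eq_infinitePi _ fun s B _ => hℙ s B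
  exact ergodic_skewShift ((measurePreserving_inv_smul_iff hact μ ν).2 hstat)
    fun ν' _ absolutelyContinuous preserving => huniq ν' inferInstance absolutelyContinuous
      ((measurePreserving_inv_smul_iff hact μ ν').1 preserving)

end Action

/-- if moreover `ν` is the unique `μ̌`-stationary probability measure on `Y`,
then the skew transformation `T(ω, y) = (Sω, (ω 0)⁻¹ • y)` is ergodic for `ℙ ⊗ ν`. -/
theorem skew_shift_ergodic
    {G : Type*} [Group G] [Countable G] [MeasurableSpace G] [MeasurableSingletonClass G]
    {Y : Type*} [TopologicalSpace Y] [CompactSpace Y] [TopologicalSpace.MetrizableSpace Y]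
    [MeasurableSpace Y] [BorelSpace Y]
    [MulAction G Y] (hact : ∀ g : G, Continuous fun y : Y => g • y)
    (μ : Measure G) [IsProbabilityMeasure μ]
    (ν : Measure Y) [IsProbabilityMeasure ν]
    (hstat : ∀ A : Set Y, MeasurableSet A → ν A = ∑' g : G, μ {g} * ν (g • A))
    (huniq : ∀ ν' : Measure Y, IsProbabilityMeasure ν' →
      (∀ A : Set Y, MeasurableSet A → ν' A = ∑' g : G, μ {g} * ν' (g • A)) → ν' = ν)
    (ℙ : Measure (ℕ → G)) [IsProbabilityMeasure ℙ]
    (hℙ : ∀ (s : Finset ℕ) (B : ℕ → Set G),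
      ℙ {ω | ∀ i ∈ s, ω i ∈ B i} = ∏ i ∈ s, μ (B i)) :
    ∀ E : Set ((ℕ → G) × Y), MeasurableSet E →
      (fun p : (ℕ → G) × Y => ((fun n => p.1 (n + 1)), (p.1 0)⁻¹ • p.2)) ⁻¹' E = E →
      ℙ.prod ν E = 0 ∨ ℙ.prod ν E = 1 := by
  have ergodic := skew_shift_ergodic_general (fun g => (hact g).measurable) μ ν hstat
    (fun ν' isProbabilityMeasure _ => huniq ν' isProbabilityMeasure) ℙ hℙ
  exact fun E hE invariant => ergodic.prob_eq_zero_or_one hE invariant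
end

section
/- Let Γ be a countable discrete group, μ a probability measure on Γ whose support generates Γ as a semigroup, and Γ₀ a normal subgroup of Γ of finite index. Consider the random walk Z_n(ω) = ω(0)·ω(1)⋯ω(n−1) on the increment space Ω = Γ^ℕ with the infinite product measure ℙ = μ^⊗ℕ. Then there exists a constant c > 0 such that for ℙ-almost every ω, the proportion (1/n)·#{k ∈ {1,…,n} : Z_k(ω) ∈ Γ₀} converges to c as n → ∞. -/
open MeasureTheory Filter Topology

/-!
Since `Z_k ∈ Γ₀` iff `Z_k⁻¹` fixes the base point of `Γ ⧸ Γ₀`, it suffices to study the Markov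
chain `X_{k+1} = ω(k)⁻¹ • X_k` on the finite set `Γ ⧸ Γ₀`. Its transition operator `P` is a
contraction of a finite-dimensional space, so every function is `f = u + (h - P h)` with `P u = u`,
and an energy identity shows that `u` is invariant under the subgroup generated by the support,
hence equal to the orbit average of `f`. Along the chain, `h - P h` sums to a martingale with
bounded increments up to a bounded error, so its time averages vanish almost surely and those of
`f` converge to the orbit average.
-/

namespace RandomWalk

open ProbabilityTheory
open scoped BigOperators

section OrthogonalIncrements

theorem tendsto_div_nat_of_tendsto_sq {s : ℕ → ℝ} {C : ℝ} (hs : ∀ n, |s (n + 1) - s n| ≤ C)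
    (hsq : Tendsto (fun m : ℕ ↦ s (m ^ 2) / (m : ℝ) ^ 2) atTop (𝓝 0)) :
    Tendsto (fun n : ℕ ↦ s n / n) atTop (𝓝 0) := by
  have hC : 0 ≤ C := (abs_nonneg _).trans (hs 0)
  have hsqrt : Tendsto Nat.sqrt atTop atTop :=
    tendsto_atTop_atTop.2 fun b ↦ ⟨b ^ 2, fun _ hn ↦ Nat.le_sqrt'.2 hn⟩
  have hbound : Tendsto (fun m : ℕ ↦ |s (m ^ 2) / (m : ℝ) ^ 2| + 2 * C / m) atTop (𝓝 0) := by
    simpa only [abs_zero, add_zero] using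
      hsq.abs.add (tendsto_const_div_atTop_nhds_zero_nat (2 * C))
  refine squeeze_zero_norm' ?_ (hbound.comp hsqrt)
  filter_upwards [eventually_ge_atTop 1] with n hn
  set m := Nat.sqrt n
  have hm : (0 : ℝ) < m := Nat.cast_pos.2 (Nat.sqrt_pos.2 hn)
  have hmn : m ^ 2 ≤ n := Nat.sqrt_le' n
  have hnm : n - m ^ 2 ≤ 2 * m := by
    have : n ≤ m * m + m + m := Nat.sqrt_le_add n
    rw [pow_two]; lia
  have hdist : |s n - s (m ^ 2)| ≤ 2 * m * C := by
    have := dist_le_Ico_sum_of_dist_le (f := s) (d := fun _ ↦ C) hmn fun {k} _ _ ↦ by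
      rw [dist_comm, Real.dist_eq]; exact hs k
    rw [Finset.sum_const, Nat.card_Ico, nsmul_eq_mul, dist_comm, Real.dist_eq] at this
    exact this.trans (mul_le_mul_of_nonneg_right (mod_cast hnm) hC)
  calc ‖s n / n‖ = |s n| / n := by rw [Real.norm_eq_abs, abs_div, Nat.abs_cast]
    _ ≤ |s n| / (m : ℝ) ^ 2 := by gcongr; exact mod_cast hmn
    _ ≤ (|s (m ^ 2)| + 2 * m * C) / (m : ℝ) ^ 2 := by
        gcongr
        linarith [abs_sub_abs_le_abs_sub (s n) (s (m ^ 2))]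
    _ = |s (m ^ 2) / (m : ℝ) ^ 2| + 2 * C / m := by
        rw [abs_div, abs_of_pos (pow_pos hm 2)]
        field_simp

variable {Ω : Type*} [MeasurableSpace Ω] {P : Measure Ω}

theorem ae_tendsto_zero_of_summable_integral_sq {Y : ℕ → Ω → ℝ} (hY : ∀ n, MemLp (Y n) 2 P)
    (hsum : Summable fun n ↦ ∫ ω, Y n ω ^ 2 ∂P) :
    ∀ᵐ ω ∂P, Tendsto (fun n ↦ Y n ω) atTop (𝓝 0) := by
  have hmeas (n : ℕ) : AEMeasurable (fun ω ↦ ENNReal.ofReal (Y n ω ^ 2)) P :=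
    ((hY n).aemeasurable.pow_const 2).ennreal_ofReal
  have hfin : ∫⁻ ω, ∑' n, ENNReal.ofReal (Y n ω ^ 2) ∂P ≠ ⊤ := by
    rw [lintegral_tsum hmeas]
    simpa only [← ofReal_integral_eq_lintegral_ofReal (hY _).integrable_sq
      (ae_of_all _ fun _ ↦ sq_nonneg _)] using hsum.tsum_ofReal_ne_top
  filter_upwards [ae_lt_top' (AEMeasurable.tsum hmeas) hfin] with ω hω
  have hsq : Tendsto (fun n ↦ Y n ω ^ 2) atTop (𝓝 0) := by
    have := (ENNReal.tendsto_toReal ENNReal.zero_ne_top).comp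
      (ENNReal.tendsto_atTop_zero_of_tsum_ne_top hω.ne)
    simpa only [Function.comp_def, ENNReal.toReal_ofReal (sq_nonneg _), ENNReal.toReal_zero]
      using this
  simpa only [ne_eq, OfNat.ofNat_ne_zero, not_false_eq_true, pow_eq_zero_iff,
    tendsto_zero_iff_abs_tendsto_zero (fun n ↦ Y n ω), Function.comp_def, Real.sqrt_sq_eq_abs,
    Real.sqrt_zero] using hsq.sqrt

theorem integral_sq_sum_range_le {D : ℕ → Ω → ℝ} {V : ℝ} (hD : ∀ n, MemLp (D n) 2 P)
    (hV : ∀ n, ∫ ω, D n ω ^ 2 ∂P ≤ V)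
    (horth : ∀ n, ∫ ω, (∑ k ∈ Finset.range n, D k ω) * D n ω ∂P = 0) (n : ℕ) :
    ∫ ω, (∑ k ∈ Finset.range n, D k ω) ^ 2 ∂P ≤ n * V := by
  induction n with
  | zero => simp
  | succ n ih =>
    let S : Ω → ℝ := fun ω ↦ ∑ k ∈ Finset.range n, D k ω
    have hS : MemLp S 2 P := memLp_finsetSum _ fun k _ ↦ hD k
    have hSD : Integrable (fun ω ↦ 2 * (S ω * D n ω)) P := (hS.integrable_mul (hD n)).const_mul 2
    calc ∫ ω, (∑ k ∈ Finset.range (n + 1), D k ω) ^ 2 ∂P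
        = ∫ ω, S ω ^ 2 + 2 * (S ω * D n ω) + D n ω ^ 2 ∂P := by
          simp only [Finset.sum_range_succ, add_sq, mul_assoc, S]
      _ = ∫ ω, S ω ^ 2 ∂P + 2 * ∫ ω, S ω * D n ω ∂P + ∫ ω, D n ω ^ 2 ∂P := by
          have hcross : Integrable (fun ω ↦ S ω ^ 2 + 2 * (S ω * D n ω)) P :=
            hS.integrable_sq.add hSD
          rw [integral_add hcross (hD n).integrable_sq, integral_add hS.integrable_sq hSD,
            integral_const_mul]
      _ ≤ (n + 1 : ℕ) * V := by
          rw [horth, Nat.cast_succ]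
          linarith [hV n]

theorem ae_tendsto_sum_range_div_of_orthogonal [IsFiniteMeasure P] {D : ℕ → Ω → ℝ} {C : ℝ}
    (hmeas : ∀ n, AEStronglyMeasurable (D n) P) (hC : ∀ n ω, |D n ω| ≤ C)
    (horth : ∀ n, ∫ ω, (∑ k ∈ Finset.range n, D k ω) * D n ω ∂P = 0) :
    ∀ᵐ ω ∂P, Tendsto (fun n : ℕ ↦ (∑ k ∈ Finset.range n, D k ω) / n) atTop (𝓝 0) := by
  have hD (n : ℕ) : MemLp (D n) 2 P := .of_bound (hmeas n) C (ae_of_all _ (hC n))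
  let V : ℝ := ∫ _, C ^ 2 ∂P
  have hV (n : ℕ) : ∫ ω, D n ω ^ 2 ∂P ≤ V :=
    integral_mono (hD n).integrable_sq (integrable_const (C ^ 2)) fun ω ↦
      sq_le_sq' (abs_le.1 (hC n ω)).1 (abs_le.1 (hC n ω)).2
  let Y : ℕ → Ω → ℝ := fun m ω ↦ (∑ k ∈ Finset.range (m ^ 2), D k ω) / (m : ℝ) ^ 2
  have hY (m : ℕ) : MemLp (Y m) 2 P := by
    simpa only [Y, div_eq_inv_mul] using (memLp_finsetSum _ fun k _ ↦ hD k).const_mul _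
  have hYsq (m : ℕ) : ∫ ω, Y m ω ^ 2 ∂P ≤ V * (1 / (m : ℝ) ^ 2) := by
    calc ∫ ω, Y m ω ^ 2 ∂P
        = (∫ ω, (∑ k ∈ Finset.range (m ^ 2), D k ω) ^ 2 ∂P) / ((m : ℝ) ^ 2) ^ 2 := by
          simp only [Y, div_pow, integral_div]
      _ ≤ (m ^ 2 : ℕ) * V / ((m : ℝ) ^ 2) ^ 2 := by
          gcongr
          exact integral_sq_sum_range_le hD hV horth _
      _ = V * (1 / (m : ℝ) ^ 2) := by
          rcases eq_or_ne m 0 with rfl | hm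
          · simp
          · push_cast
            field_simp
  have hsum : Summable fun m ↦ ∫ ω, Y m ω ^ 2 ∂P :=
    .of_nonneg_of_le (fun m ↦ integral_nonneg fun ω ↦ sq_nonneg _) hYsq
      ((Real.summable_one_div_nat_pow.2 one_lt_two).mul_left _)
  filter_upwards [ae_tendsto_zero_of_summable_integral_sq hY hsum] with ω hω
  refine tendsto_div_nat_of_tendsto_sq (C := C) (fun n ↦ ?_) hω
  rw [Finset.sum_range_succ, add_sub_cancel_left]
  exact hC n ω

end OrthogonalIncrements

section Contraction

variable {E : Type*} [NormedAddCommGroup E] [NormedSpace ℝ E]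

theorem eq_zero_of_map_eq_self_of_eq_sub {T : E →ₗ[ℝ] E} (hT : ∀ v, ‖T v‖ ≤ ‖v‖) {u h : E}
    (hfix : T u = u) (hu : u = h - T h) : u = 0 := by
  -- The iterates `T^[n] h = h - n • u` stay bounded only if `u = 0`.
  have hiter (n : ℕ) : T^[n] h = h - n • u ∧ ‖T^[n] h‖ ≤ ‖h‖ := by
    induction n with
    | zero => simp
    | succ n ih =>
      rw [Function.iterate_succ_apply']
      refine ⟨?_, (hT _).trans ih.2⟩
      rw [ih.1, map_sub, map_nsmul, hfix, succ_nsmul]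
      nth_rw 3 [hu]
      abel
  have hbound (n : ℕ) : n * ‖u‖ ≤ 2 * ‖h‖ := by
    calc n * ‖u‖ = ‖h - T^[n] h‖ := by
          rw [(hiter n).1, sub_sub_cancel, ← Nat.cast_smul_eq_nsmul ℝ, norm_smul, Real.norm_natCast]
      _ ≤ 2 * ‖h‖ := by linarith [norm_sub_le h (T^[n] h), (hiter n).2]
  by_contra hne
  obtain ⟨n, hn⟩ := exists_nat_gt (2 * ‖h‖ / ‖u‖)
  rw [div_lt_iff₀ (norm_pos_iff.2 hne)] at hn
  exact (hbound n).not_gt hn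

theorem exists_fixed_add_sub_map [FiniteDimensional ℝ E] {T : E →ₗ[ℝ] E} (hT : ∀ v, ‖T v‖ ≤ ‖v‖)
    (f : E) : ∃ u h, T u = u ∧ f = u + (h - T h) := by
  let L : E →ₗ[ℝ] E := LinearMap.id - T
  have hdisj : Disjoint (LinearMap.ker L) (LinearMap.range L) := by
    rw [Submodule.disjoint_def]
    rintro u hu ⟨h, rfl⟩
    exact eq_zero_of_map_eq_self_of_eq_sub hT (sub_eq_zero.1 hu).symm rfl
  have htop := Submodule.eq_top_of_disjoint _ _
    (add_comm (Module.finrank ℝ (LinearMap.ker L)) _ ▸ L.finrank_range_add_finrank_ker).ge hdisj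
  obtain ⟨u, hu, _, ⟨h, rfl⟩, hf⟩ := Submodule.mem_sup.1 (htop ▸ Submodule.mem_top (x := f))
  exact ⟨u, h, (sub_eq_zero.1 hu).symm, hf.symm⟩

end Contraction

section Past

variable {Ω 𝓧 𝓨 : Type*} [MeasurableSpace 𝓧] [MeasurableSpace 𝓨]

/-- The σ-algebra generated by `ξ 0, …, ξ (n - 1)`; the index is shifted by one from
`MeasureTheory.Filtration.natural`, so that `ξ n` is independent of `past ξ n`. -/
abbrev past (ξ : ℕ → Ω → 𝓧) (n : ℕ) : MeasurableSpace Ω :=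
  ⨆ i ∈ Set.Iio n, MeasurableSpace.comap (ξ i) inferInstance

theorem past_mono (ξ : ℕ → Ω → 𝓧) : Monotone (past ξ) := fun _ _ hmn ↦
  biSup_mono fun _ hi ↦ lt_of_lt_of_le hi hmn

theorem measurable_past {ξ : ℕ → Ω → 𝓧} {i n : ℕ} (hin : i < n) : Measurable[past ξ n] (ξ i) :=
  (comap_measurable (ξ i)).mono (le_biSup (fun j ↦ MeasurableSpace.comap (ξ j) _) hin) le_rfl

variable [MeasurableSpace Ω] {P : Measure Ω} {μ : Measure 𝓧}

theorem integral_comp_prodMk_eq_zero_of_indepFun [IsFiniteMeasure P] [SFinite μ]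
    {Y : Ω → 𝓨} {ξ : Ω → 𝓧} {F : 𝓨 × 𝓧 → ℝ} (hY : Measurable Y)
    (hξ : HasLaw ξ μ P) (hind : IndepFun Y ξ P) (hF : StronglyMeasurable F)
    (hint : Integrable (fun ω ↦ F (Y ω, ξ ω)) P) (hzero : ∀ y, ∫ x, F (y, x) ∂μ = 0) :
    ∫ ω, F (Y ω, ξ ω) ∂P = 0 := by
  have hpair : AEMeasurable (fun ω ↦ (Y ω, ξ ω)) P := hY.aemeasurable.prodMk hξ.aemeasurable
  have hmap : P.map (fun ω ↦ (Y ω, ξ ω)) = (P.map Y).prod μ := by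
    rw [hind.map_prod_eq_prod_map_map hY.aemeasurable hξ.aemeasurable, hξ.map_eq]
  have hint' : Integrable F ((P.map Y).prod μ) :=
    hmap ▸ (integrable_map_measure hF.aestronglyMeasurable hpair).2 hint
  rw [← integral_map hpair hF.aestronglyMeasurable, hmap, integral_prod _ hint']
  simp only [hzero, integral_zero]

theorem past_le {ξ : ℕ → Ω → 𝓧} (hξ : ∀ n, Measurable (ξ n)) (n : ℕ) :
    past ξ n ≤ ‹MeasurableSpace Ω› :=
  iSup₂_le fun i _ ↦ (hξ i).comap_le

theorem indepFun_of_measurable_past {ξ : ℕ → Ω → 𝓧} (hξ : ∀ n, Measurable (ξ n))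
    (hind : iIndepFun ξ P) {n : ℕ} {Y : Ω → 𝓨} (hY : Measurable[past ξ n] Y) :
    IndepFun Y (ξ n) P := by
  have := indep_iSup_of_disjoint (fun i ↦ (hξ i).comap_le) hind
    (Set.disjoint_singleton_right.2 (Set.self_notMem_Iio (a := n)))
  rw [iSup_singleton] at this
  exact indep_of_indep_of_le_left this hY.comap_le

end Past

section TransitionOperator

variable {Γ X : Type*} [Group Γ] [MulAction Γ X]

/-- The average of `f` over the `H`-orbit of `x`: the almost sure limit of the time averages of `f`
along a random walk started at `x` whose steps generate `H`. -/
noncomputable def orbitMean [Fintype X] (H : Subgroup Γ) (f : X → ℝ) (x : X) : ℝ :=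
  open Classical in 𝔼 y with y ∈ MulAction.orbit H x, f y

section OrbitMean

variable [Fintype X] {H : Subgroup Γ} {f : X → ℝ} {x y : X}

theorem orbitMean_eq_of_mem_orbit (hy : y ∈ MulAction.orbit H x) :
    orbitMean H f y = orbitMean H f x := by
  rw [orbitMean, MulAction.orbit_eq_iff.2 hy, orbitMean]

theorem orbitMean_comp_smul {g : Γ} (hg : g ∈ H) :
    orbitMean H (fun y ↦ f (g • y)) x = orbitMean H f x := by
  classical
  refine Finset.expect_equiv (MulAction.toPerm g) (fun y ↦ ?_) fun y _ ↦ rfl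
  rw [Finset.mem_filter_univ, Finset.mem_filter_univ, ← MulAction.orbit_eq_iff,
    ← MulAction.orbit_eq_iff]
  exact (MulAction.orbit_smul (⟨g, hg⟩ : H) y).symm ▸ Iff.rfl

theorem orbitMean_of_forall_smul_eq (hf : ∀ g ∈ H, ∀ y, f (g • y) = f y) :
    orbitMean H f x = f x := by
  classical
  refine (Finset.expect_congr rfl fun y hy ↦ ?_).trans
    (Finset.expect_const ⟨x, by simp [MulAction.mem_orbit_self]⟩ (f x))
  obtain ⟨g, rfl⟩ := (Finset.mem_filter_univ y).1 hy
  exact hf g g.2 x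

theorem orbitMean_single [DecidableEq X] :
    orbitMean H (Pi.single x 1) x = ((MulAction.orbit H x).ncard : ℝ)⁻¹ := by
  classical
  have hmem : x ∈ Finset.univ.filter (· ∈ MulAction.orbit H x) := by
    simp [MulAction.mem_orbit_self]
  rw [orbitMean, Finset.expect_eq_sum_div_card, Finset.sum_pi_single', if_pos hmem, one_div,
    ← Set.ncard_coe_finset, Finset.coe_filter_univ]
  rfl

end OrbitMean

variable [MeasurableSpace Γ]

theorem integrable_comp_smul [DiscreteMeasurableSpace Γ] [Finite X] (μ : Measure Γ)
    [IsFiniteMeasure μ] (h : X → ℝ) (x : X) : Integrable (fun g : Γ ↦ h (g • x)) μ := by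
  have := Fintype.ofFinite X
  exact .of_bound (Measurable.of_discrete).aestronglyMeasurable ‖h‖
    (ae_of_all _ fun g ↦ norm_le_pi_norm h _)

/-- The transition operator `h ↦ ∫ g, h (g • ·) ∂μ` of the Markov chain on `X` which moves from `x`
to `g • x` with `g` of law `μ`. -/
noncomputable def transitionOp [DiscreteMeasurableSpace Γ] [Finite X] (μ : Measure Γ)
    [IsFiniteMeasure μ] : (X → ℝ) →ₗ[ℝ] (X → ℝ) where
  toFun h x := ∫ g, h (g • x) ∂μ
  map_add' h k := funext fun x ↦
    integral_add (integrable_comp_smul μ h x) (integrable_comp_smul μ k x)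
  map_smul' a h := funext fun x ↦ integral_const_mul a fun g ↦ h (g • x)

theorem transitionOp_apply [DiscreteMeasurableSpace Γ] [Finite X] (μ : Measure Γ)
    [IsFiniteMeasure μ] (h : X → ℝ) (x : X) : transitionOp μ h x = ∫ g, h (g • x) ∂μ :=
  rfl

/-- The subgroup generated by the atoms of `μ`. For countable `Γ` it carries `μ`, so its orbits are
the communicating classes of the random walk when `X` is finite. -/
def supportSubgroup (μ : Measure Γ) : Subgroup Γ :=
  Subgroup.closure {g | μ {g} ≠ 0}

variable [Countable Γ] {μ : Measure Γ}

theorem ae_mem_supportSubgroup : ∀ᵐ g ∂μ, g ∈ supportSubgroup μ :=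
  ae_iff_of_countable.2 fun _ hg ↦ Subgroup.subset_closure hg

variable [MeasurableSingletonClass Γ]

theorem supportSubgroup_inv : supportSubgroup μ.inv = supportSubgroup μ := by
  have hsupport : {g | μ.inv {g} ≠ 0} = {g | μ {g} ≠ 0}⁻¹ := by
    ext g
    simp [Measure.inv_apply]
  rw [supportSubgroup, hsupport, Subgroup.closure_inv, supportSubgroup]

theorem ae_forall_smul_eq_of_transitionOp_eq [Finite X] [IsProbabilityMeasure μ] {u : X → ℝ}
    (hu : transitionOp μ u = u) : ∀ᵐ g ∂μ, ∀ x, u (g • x) = u x := by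
  have := Fintype.ofFinite X
  -- Energy identity: `∫ g, ∑ x, (u (g • x) - u x) ^ 2 ∂μ = 2 * ∑ x, u x * (u x - P u x)`.
  have hexpand (g : Γ) : ∑ x, (u (g • x) - u x) ^ 2 = ∑ x, 2 * u x * (u x - u (g • x)) := by
    have hperm : ∑ x, u (g • x) ^ 2 = ∑ x, u x ^ 2 :=
      Equiv.sum_comp (MulAction.toPerm g) fun x ↦ u x ^ 2
    rw [← sub_eq_zero, ← Finset.sum_sub_distrib, ← sub_eq_zero.2 hperm, ← Finset.sum_sub_distrib]
    exact Finset.sum_congr rfl fun x _ ↦ by ring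
  have hint (x : X) : Integrable (fun g : Γ ↦ 2 * u x * (u x - u (g • x))) μ :=
    ((integrable_const _).sub (integrable_comp_smul μ u x)).const_mul _
  have henergy : ∫ g, ∑ x, (u (g • x) - u x) ^ 2 ∂μ = 0 := by
    simp only [hexpand]
    rw [integral_finsetSum _ fun x _ ↦ hint x]
    refine Finset.sum_eq_zero fun x _ ↦ ?_
    rw [integral_const_mul, integral_sub (integrable_const _) (integrable_comp_smul μ u x),
      ← transitionOp_apply, hu]
    simp
  have hintegrable : Integrable (fun g : Γ ↦ ∑ x, (u (g • x) - u x) ^ 2) μ := by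
    simpa only [hexpand] using integrable_finsetSum _ fun x _ ↦ hint x
  filter_upwards [(integral_eq_zero_iff_of_nonneg
    (fun g ↦ Finset.sum_nonneg fun x _ ↦ sq_nonneg _) hintegrable).1 henergy] with g hg x
  have := (Finset.sum_eq_zero_iff_of_nonneg fun x _ ↦ sq_nonneg _).1 hg x (Finset.mem_univ x)
  exact sub_eq_zero.1 (pow_eq_zero_iff two_ne_zero |>.1 this)

theorem smul_eq_of_transitionOp_eq [Finite X] [IsProbabilityMeasure μ] {u : X → ℝ}
    (hu : transitionOp μ u = u) {g : Γ} (hg : g ∈ supportSubgroup μ) (x : X) :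
    u (g • x) = u x := by
  induction hg using Subgroup.closure_induction generalizing x with
  | mem g hg => exact ae_iff_of_countable.1 (ae_forall_smul_eq_of_transitionOp_eq hu) g hg x
  | one => rw [one_smul]
  | mul a b _ _ iha ihb => rw [mul_smul, iha, ihb]
  | inv a _ iha => rw [← iha (a⁻¹ • x), smul_inv_smul]

variable [Fintype X]

theorem norm_transitionOp_le [IsProbabilityMeasure μ] (h : X → ℝ) :
    ‖transitionOp μ h‖ ≤ ‖h‖ := by
  refine (pi_norm_le_iff_of_nonneg (norm_nonneg h)).2 fun x ↦ ?_
  simpa only [probReal_univ, mul_one, transitionOp_apply] using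
    norm_integral_le_of_norm_le_const (μ := μ) (ae_of_all _ fun g ↦ norm_le_pi_norm h (g • x))

theorem orbitMean_transitionOp [IsProbabilityMeasure μ] (h : X → ℝ) (x : X) :
    orbitMean (supportSubgroup μ) (transitionOp μ h) x = orbitMean (supportSubgroup μ) h x := by
  classical
  calc orbitMean (supportSubgroup μ) (transitionOp μ h) x
      = ∫ g, orbitMean (supportSubgroup μ) (fun y ↦ h (g • y)) x ∂μ := by
        simp only [orbitMean, Finset.expect_eq_sum_div_card, transitionOp_apply]
        rw [integral_div, integral_finsetSum _ fun y _ ↦ integrable_comp_smul μ h y]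
    _ = ∫ _, orbitMean (supportSubgroup μ) h x ∂μ :=
        integral_congr_ae (ae_mem_supportSubgroup.mono fun _ hg ↦ orbitMean_comp_smul hg)
    _ = orbitMean (supportSubgroup μ) h x := by simp

theorem exists_poisson_solution [IsProbabilityMeasure μ] (f : X → ℝ) :
    ∃ h : X → ℝ, f = orbitMean (supportSubgroup μ) f + (h - transitionOp μ h) := by
  obtain ⟨u, h, hu, hf⟩ := exists_fixed_add_sub_map (norm_transitionOp_le (μ := μ)) f
  refine ⟨h, ?_⟩
  suffices horbit : orbitMean (supportSubgroup μ) f = u by rw [horbit, ← hf]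
  funext x
  calc orbitMean (supportSubgroup μ) f x
      = orbitMean (supportSubgroup μ) u x + (orbitMean (supportSubgroup μ) h x
          - orbitMean (supportSubgroup μ) (transitionOp μ h) x) := by
        rw [hf]
        simp only [orbitMean, Pi.add_apply, Pi.sub_apply, Finset.expect_add_distrib,
          Finset.expect_sub_distrib]
    _ = u x := by
        rw [orbitMean_transitionOp, sub_self, add_zero]
        exact orbitMean_of_forall_smul_eq fun g hg ↦ smul_eq_of_transitionOp_eq hu hg

end TransitionOperator

section Walk

variable {Γ X Ω : Type*} [Group Γ] [MulAction Γ X]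

/-- The random walk on `X` started at `x`, whose `n`-th step acts by `ξ n` from the left. -/
def walk (ξ : ℕ → Ω → Γ) (x : X) : ℕ → Ω → X
  | 0, _ => x
  | n + 1, ω => ξ n ω • walk ξ x n ω

variable {ξ : ℕ → Ω → Γ} {x : X}

theorem walk_succ (n : ℕ) (ω : Ω) : walk ξ x (n + 1) ω = ξ n ω • walk ξ x n ω :=
  rfl

theorem walk_mem_orbit {H : Subgroup Γ} {ω : Ω} (hξ : ∀ n, ξ n ω ∈ H) (n : ℕ) :
    walk ξ x n ω ∈ MulAction.orbit H x := by
  induction n with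
  | zero => exact MulAction.mem_orbit_self x
  | succ n ih => exact MulAction.mem_orbit_of_mem_orbit (⟨ξ n ω, hξ n⟩ : H) ih

theorem walk_inv_eq (ω : ℕ → Γ) (x : X) (n : ℕ) :
    walk (fun n ω ↦ (ω n)⁻¹) x n ω = ((List.range n).map ω).prod⁻¹ • x := by
  induction n with
  | zero => simp [walk]
  | succ n ih => rw [walk_succ, ih, List.prod_range_succ, mul_inv_rev, mul_smul]

variable [MeasurableSpace Γ] [Countable Γ] [MeasurableSingletonClass Γ]
  {μ : Measure Γ} [IsProbabilityMeasure μ]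

theorem measurable_walk_past [Countable X] [MeasurableSpace X] [MeasurableSingletonClass X]
    (n : ℕ) : Measurable[past ξ n] (walk ξ x n) := by
  induction n with
  | zero => exact measurable_const
  | succ n ih =>
    have hsmul : Measurable fun p : Γ × X ↦ p.1 • p.2 := .of_discrete
    exact hsmul.comp ((measurable_past n.lt_succ_self).prodMk
      (ih.mono (past_mono ξ n.le_succ) le_rfl))

/-- The martingale difference `h (X (n + 1)) - P h (X n)` of a function `h` along the walk `X`,
where `P` is the transition operator of `μ`. -/
noncomputable def walkIncrement [Finite X] (μ : Measure Γ) [IsProbabilityMeasure μ]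
    (ξ : ℕ → Ω → Γ) (x : X) (h : X → ℝ) (n : ℕ) (ω : Ω) : ℝ :=
  h (walk ξ x (n + 1) ω) - transitionOp μ h (walk ξ x n ω)

theorem abs_walkIncrement_le [Fintype X] (h : X → ℝ) (n : ℕ) (ω : Ω) :
    |walkIncrement μ ξ x h n ω| ≤ 2 * ‖h‖ := by
  calc |walkIncrement μ ξ x h n ω|
      ≤ ‖h (walk ξ x (n + 1) ω)‖ + ‖transitionOp μ h (walk ξ x n ω)‖ := abs_sub _ _
    _ ≤ ‖h‖ + ‖h‖ := add_le_add (norm_le_pi_norm h _)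
        ((norm_le_pi_norm _ _).trans (norm_transitionOp_le h))
    _ = 2 * ‖h‖ := (two_mul _).symm

theorem sum_Icc_sub_transitionOp [Finite X] (h : X → ℝ) (n : ℕ) (ω : Ω) :
    ∑ k ∈ Finset.Icc 1 n, (h - transitionOp μ h) (walk ξ x k ω)
      = ∑ k ∈ Finset.range n, walkIncrement μ ξ x h k ω
        + (transitionOp μ h x - transitionOp μ h (walk ξ x n ω)) := by
  induction n with
  | zero => simp [walk]
  | succ n ih =>
    rw [Finset.sum_Icc_succ_top (Nat.le_add_left 1 n), ih, Finset.sum_range_succ, walkIncrement,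
      Pi.sub_apply]
    ring

theorem measurable_walkIncrement_past [Finite X] (h : X → ℝ) (n : ℕ) :
    Measurable[past ξ (n + 1)] (walkIncrement μ ξ x h n) := by
  let _ : MeasurableSpace X := ⊤
  exact (Measurable.of_discrete.comp (measurable_walk_past (n + 1))).sub
    (Measurable.of_discrete.comp ((measurable_walk_past n).mono (past_mono ξ n.le_succ) le_rfl))

variable [MeasurableSpace Ω] {P : Measure Ω}

theorem integral_mul_walkIncrement_eq_zero [Finite X] (hξ : ∀ n, Measurable (ξ n))
    (hlaw : ∀ n, HasLaw (ξ n) μ P) (hind : iIndepFun ξ P) (h : X → ℝ) {n : ℕ} {Z : Ω → ℝ}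
    (hZ : Measurable[past ξ n] Z) (hZint : Integrable Z P) :
    ∫ ω, Z ω * walkIncrement μ ξ x h n ω ∂P = 0 := by
  have := (hlaw 0).isProbabilityMeasure
  have := Fintype.ofFinite X
  let _ : MeasurableSpace X := ⊤
  let F : (ℝ × X) × Γ → ℝ := fun p ↦ p.1.1 * (h (p.2 • p.1.2) - transitionOp μ h p.1.2)
  have hF : Measurable F := by
    have hstep : Measurable fun q : X × Γ ↦ h (q.2 • q.1) - transitionOp μ h q.1 := .of_discrete
    exact (measurable_fst.comp measurable_fst).mul
      (hstep.comp ((measurable_snd.comp measurable_fst).prodMk measurable_snd))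
  have hY : Measurable[past ξ n] fun ω ↦ (Z ω, walk ξ x n ω) := hZ.prodMk (measurable_walk_past n)
  have hint : Integrable (fun ω ↦ Z ω * walkIncrement μ ξ x h n ω) P :=
    hZint.mul_bdd (c := 2 * ‖h‖)
      ((measurable_walkIncrement_past h n).mono (past_le hξ _) le_rfl).aestronglyMeasurable
      (ae_of_all _ fun ω ↦ abs_walkIncrement_le h n ω)
  refine integral_comp_prodMk_eq_zero_of_indepFun (hY.mono (past_le hξ n) le_rfl) (hlaw n)
    (indepFun_of_measurable_past hξ hind hY) hF.stronglyMeasurable hint fun p ↦ ?_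
  change ∫ g, p.1 * (h (g • p.2) - transitionOp μ h p.2) ∂μ = 0
  rw [integral_const_mul, integral_sub (integrable_comp_smul μ h p.2) (integrable_const _),
    ← transitionOp_apply]
  simp

theorem ae_tendsto_sum_walkIncrement_div [Finite X] (hξ : ∀ n, Measurable (ξ n))
    (hlaw : ∀ n, HasLaw (ξ n) μ P) (hind : iIndepFun ξ P) (h : X → ℝ) (x : X) :
    ∀ᵐ ω ∂P, Tendsto (fun n : ℕ ↦ (∑ k ∈ Finset.range n, walkIncrement μ ξ x h k ω) / n)
      atTop (𝓝 0) := by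
  have := (hlaw 0).isProbabilityMeasure
  have := Fintype.ofFinite X
  have hmeas (n : ℕ) : Measurable (walkIncrement μ ξ x h n) :=
    (measurable_walkIncrement_past h n).mono (past_le hξ _) le_rfl
  refine ae_tendsto_sum_range_div_of_orthogonal (fun n ↦ (hmeas n).aestronglyMeasurable)
    (abs_walkIncrement_le h) fun n ↦ integral_mul_walkIncrement_eq_zero hξ hlaw hind h ?_ ?_
  · exact Finset.measurable_fun_sum _ fun k hk ↦ (measurable_walkIncrement_past h k).mono
      (past_mono ξ (Finset.mem_range.1 hk)) le_rfl
  · exact integrable_finsetSum _ fun k _ ↦ .of_bound (hmeas k).aestronglyMeasurable (2 * ‖h‖)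
      (ae_of_all _ fun ω ↦ abs_walkIncrement_le h k ω)

theorem ae_tendsto_average_walk [Fintype X] (hξ : ∀ n, Measurable (ξ n))
    (hlaw : ∀ n, HasLaw (ξ n) μ P) (hind : iIndepFun ξ P) (f : X → ℝ) (x : X) :
    ∀ᵐ ω ∂P, Tendsto (fun n : ℕ ↦ (∑ k ∈ Finset.Icc 1 n, f (walk ξ x k ω)) / n)
      atTop (𝓝 (orbitMean (supportSubgroup μ) f x)) := by
  obtain ⟨h, hf⟩ := exists_poisson_solution (μ := μ) f
  have hmem : ∀ᵐ ω ∂P, ∀ n, ξ n ω ∈ supportSubgroup μ := ae_all_iff.2 fun n ↦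
    ((hlaw n).ae_iff .of_discrete).2 ae_mem_supportSubgroup
  filter_upwards [hmem, ae_tendsto_sum_walkIncrement_div hξ hlaw hind h x] with ω hω hlim
  set c := orbitMean (supportSubgroup μ) f x
  let r : ℕ → ℝ := fun n ↦ transitionOp μ h x - transitionOp μ h (walk ξ x n ω)
  have hsum (n : ℕ) : ∑ k ∈ Finset.Icc 1 n, f (walk ξ x k ω)
      = n * c + (∑ k ∈ Finset.range n, walkIncrement μ ξ x h k ω + r n) := by
    have hconst (k : ℕ) : f (walk ξ x k ω) = c + (h - transitionOp μ h) (walk ξ x k ω) := by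
      have hc : orbitMean (supportSubgroup μ) f (walk ξ x k ω) = c :=
        orbitMean_eq_of_mem_orbit (walk_mem_orbit hω k)
      rw [← hc]
      exact congrFun hf _
    simp only [hconst, Finset.sum_add_distrib, sum_Icc_sub_transitionOp, Finset.sum_const,
      Nat.card_Icc, Nat.add_sub_cancel, nsmul_eq_mul, r]
  have hr : Tendsto (fun n : ℕ ↦ r n / n) atTop (𝓝 0) := by
    refine squeeze_zero_norm (fun n ↦ ?_)
      (tendsto_const_div_atTop_nhds_zero_nat (‖transitionOp μ h‖ + ‖transitionOp μ h‖))
    rw [norm_div, Real.norm_natCast]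
    gcongr
    exact (norm_sub_le _ _).trans (add_le_add (norm_le_pi_norm _ _) (norm_le_pi_norm _ _))
  have hlimit := (tendsto_const_nhds (x := c)).add (hlim.add hr)
  rw [add_zero, add_zero] at hlimit
  refine hlimit.congr' ?_
  filter_upwards [eventually_ne_atTop 0] with n hn
  rw [hsum]
  field_simp

end Walk

theorem ncard_orbit_eq_relIndex_stabilizer {Γ X : Type*} [Group Γ] [MulAction Γ X]
    (H : Subgroup Γ) (x : X) :
    (MulAction.orbit H x).ncard = (MulAction.stabilizer Γ x).relIndex H := by
  rw [← MulAction.index_stabilizer]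
  rfl

theorem ncard_setOf_prod_mem {Γ : Type*} [Group Γ] (K : Subgroup Γ) [DecidableEq (Γ ⧸ K)]
    (ω : ℕ → Γ) (n : ℕ) :
    ({k : ℕ | 1 ≤ k ∧ k ≤ n ∧ ((List.range k).map ω).prod ∈ K}.ncard : ℝ)
      = ∑ k ∈ Finset.Icc 1 n, (Pi.single ((1 : Γ) : Γ ⧸ K) 1 : Γ ⧸ K → ℝ)
          (walk (fun n ω ↦ (ω n)⁻¹) ((1 : Γ) : Γ ⧸ K) k ω) := by
  classical
  have hvisit (k : ℕ) : walk (fun n ω ↦ (ω n)⁻¹) ((1 : Γ) : Γ ⧸ K) k ω = ((1 : Γ) : Γ ⧸ K)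
      ↔ ((List.range k).map ω).prod ∈ K := by
    rw [walk_inv_eq, MulAction.Quotient.smul_coe, QuotientGroup.eq]
    simp
  have hset : {k : ℕ | 1 ≤ k ∧ k ≤ n ∧ ((List.range k).map ω).prod ∈ K}
      = (Finset.Icc 1 n).filter fun k ↦ ((List.range k).map ω).prod ∈ K := by
    ext k
    simp [and_assoc]
  simp only [Pi.single_apply, hvisit, hset, Set.ncard_coe_finset, Finset.sum_boole]

end RandomWalk

open RandomWalk
open ProbabilityTheory (HasLaw iIndepFun_infinitePi)

theorem frequency_of_visits_to_finite_index_subgroup_general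
    {Γ : Type*} [Group Γ] [Countable Γ] [MeasurableSpace Γ] [MeasurableSingletonClass Γ]
    (μ : Measure Γ) [IsProbabilityMeasure μ] (Γ₀ : Subgroup Γ) [Γ₀.FiniteIndex]
    (ℙ : Measure (ℕ → Γ))
    (hℙ : ∀ (s : Finset ℕ) (B : ℕ → Set Γ),
      ℙ {ω | ∀ i ∈ s, ω i ∈ B i} = ∏ i ∈ s, μ (B i)) :
    ∀ᵐ ω ∂ℙ, Tendsto
      (fun n : ℕ =>
        (Set.ncard {k : ℕ | 1 ≤ k ∧ k ≤ n ∧ ((List.range k).map ω).prod ∈ Γ₀} : ℝ) / n)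
      atTop (𝓝 (Γ₀.relIndex (supportSubgroup μ) : ℝ)⁻¹) := by
  classical
  have := Fintype.ofFinite (Γ ⧸ Γ₀)
  obtain rfl : ℙ = Measure.infinitePi fun _ ↦ μ := Measure.eq_infinitePi _ fun s B _ ↦ hℙ s B
  have : IsProbabilityMeasure μ.inv := Measure.isProbabilityMeasure_map (by fun_prop)
  have hlaw (n : ℕ) : HasLaw (fun ω : ℕ → Γ ↦ (ω n)⁻¹) μ.inv (Measure.infinitePi fun _ ↦ μ) :=
    .fun_comp ⟨by fun_prop, rfl⟩ (measurePreserving_eval_infinitePi (fun _ ↦ μ) n).hasLaw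
  have hlim := ae_tendsto_average_walk (ξ := fun n (ω : ℕ → Γ) ↦ (ω n)⁻¹) (by fun_prop) hlaw
    (iIndepFun_infinitePi fun _ ↦ measurable_inv) (Pi.single ((1 : Γ) : Γ ⧸ Γ₀) 1) (1 : Γ)
  simpa only [← ncard_setOf_prod_mem, orbitMean_single, ncard_orbit_eq_relIndex_stabilizer,
    MulAction.stabilizer_quotient, supportSubgroup_inv] using hlim

/-- for an admissible random walk on a countable group `Γ` and a finite-index
normal subgroup `Γ₀ ⊴ Γ`, almost surely the proportion of times `k ∈ {1, …, n}` with
`Z_k ∈ Γ₀` converges to a positive constant `c`. -/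
theorem frequency_of_visits_to_finite_index_subgroup
    {Γ : Type*} [Group Γ] [Countable Γ] [MeasurableSpace Γ] [MeasurableSingletonClass Γ]
    (μ : Measure Γ) [IsProbabilityMeasure μ]
    (hadm : Subsemigroup.closure {g : Γ | μ {g} ≠ 0} = ⊤)
    (Γ₀ : Subgroup Γ) [Γ₀.Normal] [Γ₀.FiniteIndex]
    (ℙ : Measure (ℕ → Γ)) [IsProbabilityMeasure ℙ]
    (hℙ : ∀ (s : Finset ℕ) (B : ℕ → Set Γ),
      ℙ {ω | ∀ i ∈ s, ω i ∈ B i} = ∏ i ∈ s, μ (B i)) :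
    ∃ c : ℝ, 0 < c ∧ ∀ᵐ ω ∂ℙ, Tendsto
      (fun n : ℕ =>
        (Set.ncard {k : ℕ | 1 ≤ k ∧ k ≤ n ∧ ((List.range k).map ω).prod ∈ Γ₀} : ℝ) / n)
      atTop (𝓝 c) :=
  have := Γ₀.isFiniteRelIndex_of_finiteIndex (K := supportSubgroup μ)
  ⟨_, inv_pos.2 (Nat.cast_pos.2 (Nat.pos_of_ne_zero Subgroup.relIndex_ne_zero)),
    frequency_of_visits_to_finite_index_subgroup_general μ Γ₀ ℙ hℙ⟩
end

section
/- Let Γ be a countable discrete group acting by isometries on a metric space (X, d), and fix o ∈ X. Let μ be a probability measure on Γ with finite first moment, i.e. ∑_{g∈Γ} μ({g})·d(g•o, o) < ∞. Consider the random walk Z_n(ω) = ω(0)·ω(1)⋯ω(n−1) on the increment space Ω = Γ^ℕ with the infinite product measure ℙ = μ^⊗ℕ. Let λ = inf_{n≥1} (1/n)·∫_Ω d(Z_n(ω)•o, o) dℙ(ω). Then λ is finite and for ℙ-almost every ω ∈ Ω, (1/n)·d(Z_n(ω)•o, o) converges to λ as n → ∞. -/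
open MeasureTheory Filter Topology

/-!
The displacements `d(Zₙ o, o)` form a nonnegative subadditive cocycle over the Bernoulli shift, so
the claim is an instance of Kingman's theorem, with `L = inf (1/n) ∫ fₙ`.

For the lower bound `L ≤ ∫ liminf fₙ / n`, the function `ℓ = liminf fₙ / n` is almost everywhere
invariant, and from most points of an orbit some block of length at most `K` has average cost at
most `ℓ + ε`. Covering the orbit greedily by such blocks, and by single steps at the remaining
points, gives `n L ≤ ∫ fₙ ≤ n (∫ ℓ + ε + o(1)) + O(K)`.

The upper bound follows from the lower one. If `Sₙ` are the Birkhoff sums of `g`, then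
`(n M - Sₙ)⁺` is again a nonnegative subadditive cocycle, and its lower bound reads
`∫ limsup Sₙ / n ≤ ∫ g` as `M → ∞`. For `g = fₘ` over the `m`-th iterate of the map this gives
`∫ limsup fₙ / n ≤ (1/m) ∫ fₘ` for every `m`. Hence `∫ limsup fₙ / n ≤ L ≤ ∫ liminf fₙ / n`, and the
limit exists almost everywhere. It is invariant, hence constant: an invariant set of the shift is a
tail event, so Kolmogorov's zero-one law makes the shift ergodic.
-/

open scoped ENNReal

section SubadditiveArray

/-- Kingman's subadditive arrays: `a i k` is the cost of the time interval `[i, k)`. -/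
structure IsSubadditiveArray {M : Type*} [AddCommMonoid M] [LE M] (a : ℕ → ℕ → M) : Prop where
  apply_self : ∀ i, a i i = 0
  apply_le_add : ∀ {i j k}, i ≤ j → j ≤ k → a i k ≤ a i j + a j k

namespace IsSubadditiveArray

variable {M : Type*} [AddCommMonoid M] [PartialOrder M] [IsOrderedAddMonoid M] {a : ℕ → ℕ → M}

theorem le_sum_Ico (h : IsSubadditiveArray a) {m n : ℕ} (hmn : m ≤ n) :
    a m n ≤ ∑ i ∈ Finset.Ico m n, a i (i + 1) := by
  induction n, hmn using Nat.le_induction with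
  | base => simp [h.apply_self]
  | succ n hmn ih =>
    rw [Finset.sum_Ico_succ_top hmn]
    exact (h.apply_le_add hmn n.le_succ).trans (by gcongr)

/-- Cover `[m, n)` greedily from the left, using a cheap block of length at most `K` at each good
time and a single step at each bad one; fewer than `K` steps remain at the end. -/
theorem le_nsmul_add_sum_indicator_add_sum [CanonicallyOrderedAdd M] (h : IsSubadditiveArray a)
    {c : M} {K : ℕ} {bad : Set ℕ}
    (hgood : ∀ i ∉ bad, ∃ N, 1 ≤ N ∧ N ≤ K ∧ a i (i + N) ≤ N • c) {m n : ℕ} (hmn : m ≤ n) :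
    a m n ≤ (n - m) • c + ∑ i ∈ Finset.Ico m n, bad.indicator (fun i => a i (i + 1)) i
      + ∑ i ∈ Finset.Ico (n - K) n, a i (i + 1) := by
  induction hd : n - m using Nat.strong_induction_on generalizing m with
  | _ d ih =>
  subst hd
  by_cases hK : n - m ≤ K
  · calc a m n ≤ ∑ i ∈ Finset.Ico m n, a i (i + 1) := h.le_sum_Ico hmn
      _ ≤ ∑ i ∈ Finset.Ico (n - K) n, a i (i + 1) :=
        Finset.sum_le_sum_of_subset (Finset.Ico_subset_Ico_left (by omega))
      _ ≤ _ := le_add_self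
  obtain ⟨N, hN, hNn, hblock⟩ : ∃ N, 1 ≤ N ∧ m + N ≤ n ∧ a m (m + N) ≤
      N • c + ∑ i ∈ Finset.Ico m (m + N), bad.indicator (fun i => a i (i + 1)) i := by
    by_cases hm : m ∈ bad
    · exact ⟨1, le_rfl, by omega, by simp [hm]⟩
    · obtain ⟨N, hN, hNK, hcheap⟩ := hgood m hm
      exact ⟨N, hN, by omega, hcheap.trans le_self_add⟩
  calc a m n ≤ a m (m + N) + a (m + N) n := h.apply_le_add (by omega) hNn
    _ ≤ _ := add_le_add hblock (ih (n - (m + N)) (by omega) hNn rfl)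
    _ = _ := by
      rw [← Finset.sum_Ico_consecutive _ (Nat.le_add_right m N) hNn,
        show n - m = N + (n - (m + N)) by omega, add_nsmul]
      abel

end IsSubadditiveArray

end SubadditiveArray

section Limits

theorem tendsto_const_div_natCast {c : ℝ≥0∞} (hc : c ≠ ∞) :
    Tendsto (fun n : ℕ => c / n) atTop (𝓝 0) := by
  simpa using ENNReal.Tendsto.const_div ENNReal.tendsto_nat_nhds_top (.inr hc)

theorem le_of_forall_natCast_mul_le {x y C : ℝ≥0∞} (hC : C ≠ ∞)
    (h : ∀ n : ℕ, n * x ≤ n * y + C) : x ≤ y := by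
  have hlim : Tendsto (fun n : ℕ => y + C / n) atTop (𝓝 (y + 0)) :=
    tendsto_const_nhds.add (tendsto_const_div_natCast hC)
  rw [add_zero] at hlim
  refine ge_of_tendsto hlim ((eventually_ge_atTop 1).mono fun n hn => ?_)
  have hn0 : (n : ℝ≥0∞) ≠ 0 := by simp; omega
  calc x ≤ (n * y + C) / n :=
        (ENNReal.le_div_iff_mul_le (.inl hn0) (by simp)).2 (by rw [mul_comm]; exact h n)
    _ = y + C / n := by
      rw [ENNReal.add_div, mul_comm, ENNReal.mul_div_cancel_right hn0 (by simp)]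

theorem tendsto_natCast_mul_div_div_natCast {m : ℕ} (hm : m ≠ 0) :
    Tendsto (fun n : ℕ => (m * (n / m : ℕ) : ℝ≥0∞) / n) atTop (𝓝 1) := by
  have hmod : Tendsto (fun n : ℕ => ((n % m : ℕ) : ℝ≥0∞) / n) atTop (𝓝 0) := by
    refine tendsto_of_tendsto_of_tendsto_of_le_of_le tendsto_const_nhds
      (tendsto_const_div_natCast (ENNReal.natCast_ne_top m)) (fun n => zero_le) fun n => ?_
    dsimp only
    gcongr
    exact (Nat.mod_lt n (Nat.pos_of_ne_zero hm)).le
  have hsub := ENNReal.Tendsto.sub tendsto_const_nhds hmod (.inl ENNReal.one_ne_top)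
  rw [tsub_zero] at hsub
  refine hsub.congr' ((eventually_ne_atTop 0).mono fun n hn => ?_)
  have hsplit : (m * (n / m : ℕ) : ℝ≥0∞) / n + ((n % m : ℕ) : ℝ≥0∞) / n = 1 := by
    rw [← ENNReal.add_div, ← Nat.cast_mul, ← Nat.cast_add, Nat.div_add_mod]
    exact ENNReal.div_self (by simpa using hn) (by simp)
  rw [← hsplit, ENNReal.add_sub_cancel_right (ENNReal.div_ne_top (by simp) (by simpa using hn))]

theorem tendsto_natCast_div_div_natCast {m : ℕ} (hm : m ≠ 0) :
    Tendsto (fun n : ℕ => ((n / m : ℕ) : ℝ≥0∞) / n) atTop (𝓝 (m : ℝ≥0∞)⁻¹) := by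
  have hm0 : (m : ℝ≥0∞) ≠ 0 := by simpa using hm
  have hlim := ENNReal.Tendsto.const_mul (tendsto_natCast_mul_div_div_natCast hm)
    (.inl one_ne_zero) (a := (m : ℝ≥0∞)⁻¹)
  rw [mul_one] at hlim
  refine hlim.congr fun n => ?_
  rw [← mul_div_assoc, ENNReal.inv_mul_cancel_left hm0 (by simp)]

theorem tendsto_comp_div {b : ℕ → ℝ≥0∞} {a r : ℝ≥0∞} {φ : ℕ → ℕ}
    (hb : Tendsto (fun n : ℕ => b n / n) atTop (𝓝 a)) (ha : a ≠ ∞) (hφ : Tendsto φ atTop atTop)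
    (hr : Tendsto (fun n : ℕ => (φ n : ℝ≥0∞) / n) atTop (𝓝 r)) (hr0 : r ≠ ∞) :
    Tendsto (fun n : ℕ => b (φ n) / n) atTop (𝓝 (a * r)) := by
  refine (ENNReal.Tendsto.mul (hb.comp hφ) (.inr hr0) hr (.inr ha)).congr' ?_
  filter_upwards [hφ.eventually_ge_atTop 1] with n hn
  rw [Function.comp_apply, ← mul_div_assoc,
    ENNReal.div_mul_cancel (by simp; omega) (by simp)]

end Limits

section Growth

variable {Ω : Type*}

/-- The lower growth rate `liminf fₙ / n` of a sequence of functions. -/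
noncomputable def lowerGrowth (f : ℕ → Ω → ℝ≥0∞) (ω : Ω) : ℝ≥0∞ :=
  liminf (fun n : ℕ => f n ω / n) atTop

/-- The upper growth rate `limsup fₙ / n` of a sequence of functions. -/
noncomputable def upperGrowth (f : ℕ → Ω → ℝ≥0∞) (ω : Ω) : ℝ≥0∞ :=
  limsup (fun n : ℕ => f n ω / n) atTop

/-- The time constant `inf (1/n) ∫ fₙ` over `n ≥ 1`, the candidate for the mean growth rate. -/
noncomputable def timeConstant [MeasurableSpace Ω] (P : Measure Ω) (f : ℕ → Ω → ℝ≥0∞) : ℝ≥0∞ :=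
  ⨅ n : {n : ℕ // 1 ≤ n}, (∫⁻ ω, f n ω ∂P) / (n : ℕ)

/-- The points from which no block of length at most `K` has average cost at most `c`. -/
def slowSet (f : ℕ → Ω → ℝ≥0∞) (c : Ω → ℝ≥0∞) (K : ℕ) : Set Ω :=
  {ω | ∀ N : ℕ, 1 ≤ N → N ≤ K → N * c ω < f N ω}

variable {f : ℕ → Ω → ℝ≥0∞} {c : Ω → ℝ≥0∞}

theorem antitone_slowSet : Antitone (slowSet f c) :=
  fun _ _ hKL _ hω N hN hNK => hω N hN (hNK.trans hKL)

theorem iInter_slowSet_lowerGrowth_add {ε : ℝ≥0∞} (hε : ε ≠ 0) :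
    ⋂ K, slowSet f (fun ω => lowerGrowth f ω + ε) K = ∅ := by
  refine Set.eq_empty_of_forall_notMem fun ω hω => ?_
  have hslow (N : ℕ) (hN : 1 ≤ N) : N * (lowerGrowth f ω + ε) < f N ω :=
    Set.mem_iInter.1 hω N N hN le_rfl
  have hfin : lowerGrowth f ω ≠ ∞ := by
    intro htop
    simpa [htop] using hslow 1 le_rfl
  obtain ⟨N, hfast, hN⟩ := ((frequently_lt_of_liminf_lt (by isBoundedDefault)
    (ENNReal.lt_add_right hfin hε)).and_eventually (eventually_ge_atTop 1)).exists
  rw [ENNReal.div_lt_iff (by simp; omega) (by simp), mul_comm] at hfast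
  exact lt_asymm hfast (hslow N hN)

theorem lowerGrowth_mul_sub {M : ℝ≥0∞} (hM : M ≠ ∞) (ω : Ω) :
    lowerGrowth (fun n ω => n * M - f n ω) ω = M - upperGrowth f ω := by
  rw [upperGrowth, ← ENNReal.liminf_const_sub _ _ hM]
  refine liminf_congr ((eventually_ge_atTop 1).mono fun n hn => ?_)
  have hn0 : (n : ℝ≥0∞) ≠ 0 := by simp; omega
  rw [ENNReal.sub_div fun _ _ => hn0, mul_comm, ENNReal.mul_div_cancel_right hn0 (by simp)]

variable [MeasurableSpace Ω] {P : Measure Ω}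

theorem measurable_lowerGrowth (hf : ∀ n, Measurable (f n)) : Measurable (lowerGrowth f) :=
  Measurable.liminf fun n => (hf n).div_const _

theorem measurable_upperGrowth (hf : ∀ n, Measurable (f n)) : Measurable (upperGrowth f) :=
  Measurable.limsup fun n => (hf n).div_const _

theorem timeConstant_le {n : ℕ} (hn : 1 ≤ n) : timeConstant P f ≤ (∫⁻ ω, f n ω ∂P) / n :=
  iInf_le (fun n : {n : ℕ // 1 ≤ n} => (∫⁻ ω, f n ω ∂P) / (n : ℕ)) ⟨n, hn⟩

theorem natCast_mul_timeConstant_le (n : ℕ) : n * timeConstant P f ≤ ∫⁻ ω, f n ω ∂P := by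
  rcases n.eq_zero_or_pos with rfl | hn
  · simp
  rw [mul_comm]
  exact ENNReal.mul_le_of_le_div (timeConstant_le hn)

theorem timeConstant_ne_top (hint : ∫⁻ ω, f 1 ω ∂P ≠ ∞) : timeConstant P f ≠ ∞ :=
  ne_top_of_le_ne_top hint (by simpa using timeConstant_le (P := P) (f := f) le_rfl)

theorem measurableSet_slowSet (hf : ∀ n, Measurable (f n)) (hc : Measurable c) (K : ℕ) :
    MeasurableSet (slowSet f c K) := by
  simp only [slowSet, Set.ofPred_forall]
  exact .iInter fun N => .iInter fun _ => .iInter fun _ =>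
    measurableSet_lt (hc.const_mul _) (hf N)

theorem tendsto_setLIntegral_slowSet [IsFiniteMeasure P] (hf : ∀ n, Measurable (f n))
    (hint : ∫⁻ ω, f 1 ω ∂P ≠ ∞) {ε : ℝ≥0∞} (hε : ε ≠ 0) :
    Tendsto (fun K => ∫⁻ ω in slowSet f (fun ω => lowerGrowth f ω + ε) K, f 1 ω ∂P)
      atTop (𝓝 0) := by
  have hmeas (K : ℕ) : MeasurableSet (slowSet f (fun ω => lowerGrowth f ω + ε) K) :=
    measurableSet_slowSet hf ((measurable_lowerGrowth hf).add_const ε) K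
  refine tendsto_setLIntegral_zero hint ?_
  simpa [iInter_slowSet_lowerGrowth_add hε, Function.comp_def] using
    tendsto_measure_iInter_atTop (μ := P) (fun K => (hmeas K).nullMeasurableSet)
      antitone_slowSet ⟨0, measure_ne_top _ _⟩

theorem ae_tendsto_of_lintegral_upperGrowth_le (hf : ∀ n, Measurable (f n))
    (hfin : ∫⁻ ω, lowerGrowth f ω ∂P ≠ ∞)
    (h : ∫⁻ ω, upperGrowth f ω ∂P ≤ ∫⁻ ω, lowerGrowth f ω ∂P) :
    ∀ᵐ ω ∂P, Tendsto (fun n : ℕ => f n ω / n) atTop (𝓝 (lowerGrowth f ω)) := by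
  have hle : lowerGrowth f ≤ᵐ[P] upperGrowth f := ae_of_all _ fun ω => liminf_le_limsup
  filter_upwards [ae_eq_of_ae_le_of_lintegral_le hle hfin
    (measurable_upperGrowth hf).aemeasurable h] with ω hω
  exact tendsto_of_liminf_eq_limsup rfl hω.symm

end Growth

section Cocycle

variable {Ω : Type*} {T : Ω → Ω} {f : ℕ → Ω → ℝ≥0∞} {g : Ω → ℝ≥0∞}

/-- Nonnegative subadditive cocycles over `T`, the processes of Kingman's ergodic theorem. -/
structure IsSubadditiveCocycle (T : Ω → Ω) (f : ℕ → Ω → ℝ≥0∞) : Prop where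
  apply_zero : ∀ ω, f 0 ω = 0
  apply_add_le : ∀ m n ω, f (m + n) ω ≤ f m ω + f n (T^[m] ω)

theorem isSubadditiveCocycle_birkhoffSum : IsSubadditiveCocycle T (birkhoffSum T g) where
  apply_zero := birkhoffSum_zero T g
  apply_add_le m n ω := (birkhoffSum_add T g m n ω).le

theorem isSubadditiveCocycle_mul_sub_birkhoffSum (M : ℝ≥0∞) :
    IsSubadditiveCocycle T fun n ω => n * M - birkhoffSum T g n ω where
  apply_zero ω := by simp
  apply_add_le m n ω := by
    rw [Nat.cast_add, add_mul, birkhoffSum_add]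
    exact add_tsub_add_le_tsub_add_tsub

theorem tendsto_birkhoffSum_mod_div {m : ℕ} (hm : m ≠ 0) {ω : Ω} {a : ℝ≥0∞} (ha : a ≠ ∞)
    (h : Tendsto (fun n : ℕ => birkhoffSum T g n ω / n) atTop (𝓝 a)) :
    Tendsto (fun n : ℕ => birkhoffSum T g (n % m) (T^[m * (n / m)] ω) / n) atTop (𝓝 0) := by
  have hφ : Tendsto (fun n => m * (n / m)) atTop atTop :=
    (Nat.tendsto_div_const_atTop hm).const_mul_atTop' (Nat.pos_of_ne_zero hm)
  have hhead : Tendsto (fun n : ℕ => birkhoffSum T g (m * (n / m)) ω / n) atTop (𝓝 a) := by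
    simpa using tendsto_comp_div h ha hφ
      (by simpa using tendsto_natCast_mul_div_div_natCast hm) ENNReal.one_ne_top
  have hsub := ENNReal.Tendsto.sub h hhead (.inl ha)
  rw [tsub_self] at hsub
  refine hsub.congr' ((hhead.eventually_ne ha).mono fun n hn => ?_)
  have hsplit : birkhoffSum T g n ω = birkhoffSum T g (m * (n / m)) ω
      + birkhoffSum T g (n % m) (T^[m * (n / m)] ω) := by
    rw [← birkhoffSum_add, Nat.div_add_mod]
  rw [hsplit, ENNReal.add_div, ENNReal.add_sub_cancel_left hn]

namespace IsSubadditiveCocycle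

theorem iterate (h : IsSubadditiveCocycle T f) (m : ℕ) :
    IsSubadditiveCocycle T^[m] fun q => f (m * q) where
  apply_zero := h.apply_zero
  apply_add_le p q ω := by
    rw [mul_add, ← Function.iterate_mul]
    exact h.apply_add_le _ _ ω

theorem isSubadditiveArray (h : IsSubadditiveCocycle T f) (ω : Ω) :
    IsSubadditiveArray fun i k => f (k - i) (T^[i] ω) where
  apply_self i := by simp [h.apply_zero]
  apply_le_add {i j k} hij hjk := by
    have hsplit := h.apply_add_le (j - i) (k - j) (T^[i] ω)
    rwa [← Function.iterate_add_apply, show j - i + (k - j) = k - i by omega,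
      show j - i + i = j by omega] at hsplit

theorem le_birkhoffSum (h : IsSubadditiveCocycle T f) (n : ℕ) (ω : Ω) :
    f n ω ≤ birkhoffSum T (f 1) n ω := by
  simpa [birkhoffSum] using (h.isSubadditiveArray ω).le_sum_Ico n.zero_le

theorem mul_le_birkhoffSum (h : IsSubadditiveCocycle T f) (m q : ℕ) (ω : Ω) :
    f (m * q) ω ≤ birkhoffSum T^[m] (f m) q ω := by
  simpa using (h.iterate m).le_birkhoffSum q ω

theorem le_add_birkhoffSum_mod (h : IsSubadditiveCocycle T f) (m n : ℕ) (ω : Ω) :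
    f n ω ≤ birkhoffSum T^[m] (f m) (n / m) ω
      + birkhoffSum T (f 1) (n % m) (T^[m * (n / m)] ω) :=
  calc f n ω = f (m * (n / m) + n % m) ω := by rw [Nat.div_add_mod]
    _ ≤ f (m * (n / m)) ω + f (n % m) (T^[m * (n / m)] ω) := h.apply_add_le _ _ ω
    _ ≤ _ := add_le_add (h.mul_le_birkhoffSum m _ ω) (h.le_birkhoffSum _ _)

theorem le_mul_add_birkhoffSum_slowSet (h : IsSubadditiveCocycle T f) {c : Ω → ℝ≥0∞} {ω : Ω}
    (hc : ∀ i, c (T^[i] ω) = c ω) (K n : ℕ) :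
    f n ω ≤ n * c ω + birkhoffSum T ((slowSet f c K).indicator (f 1)) n ω
      + ∑ i ∈ Finset.Ico (n - K) n, f 1 (T^[i] ω) := by
  have hgood : ∀ i ∉ (fun i => T^[i] ω) ⁻¹' slowSet f c K,
      ∃ N, 1 ≤ N ∧ N ≤ K ∧ f (i + N - i) (T^[i] ω) ≤ N • c ω := by
    intro i hi
    simpa [slowSet, hc, and_assoc] using hi
  have hcover := (h.isSubadditiveArray ω).le_nsmul_add_sum_indicator_add_sum hgood n.zero_le
  have hindicator (i : ℕ) :
      ((fun i => T^[i] ω) ⁻¹' slowSet f c K).indicator (fun i => f 1 (T^[i] ω)) i =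
        (slowSet f c K).indicator (f 1) (T^[i] ω) := rfl
  simpa [birkhoffSum, hindicator] using hcover

theorem upperGrowth_le_of_tendsto (h : IsSubadditiveCocycle T f) {m : ℕ}
    (hm : m ≠ 0) {ω : Ω} {a b : ℝ≥0∞} (ha : a ≠ ∞) (hb : b ≠ ∞)
    (h1 : Tendsto (fun n : ℕ => birkhoffSum T (f 1) n ω / n) atTop (𝓝 a))
    (hblock : Tendsto (fun q : ℕ => birkhoffSum T^[m] (f m) q ω / q) atTop (𝓝 b)) :
    upperGrowth f ω ≤ b / m := by
  have hhead : Tendsto (fun n : ℕ => birkhoffSum T^[m] (f m) (n / m) ω / n) atTop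
      (𝓝 (b / m)) :=
    tendsto_comp_div hblock hb (Nat.tendsto_div_const_atTop hm)
      (tendsto_natCast_div_div_natCast hm) (by simpa using hm)
  have hlim := hhead.add (tendsto_birkhoffSum_mod_div hm ha h1)
  rw [add_zero] at hlim
  calc upperGrowth f ω ≤ limsup (fun n : ℕ => birkhoffSum T^[m] (f m) (n / m) ω / n
        + birkhoffSum T (f 1) (n % m) (T^[m * (n / m)] ω) / n) atTop := by
        refine limsup_le_limsup (.of_forall fun n => ?_)
        dsimp only
        rw [← ENNReal.add_div]
        exact ENNReal.div_le_div_right (h.le_add_birkhoffSum_mod m n ω) _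
    _ = b / m := hlim.limsup_eq

theorem lowerGrowth_le_lowerGrowth_comp (h : IsSubadditiveCocycle T f) {ω : Ω}
    (hω : f 1 ω ≠ ∞) : lowerGrowth f ω ≤ lowerGrowth f (T ω) := by
  calc lowerGrowth f ω = liminf (fun n : ℕ => f (n + 1) ω / (n + 1 : ℕ)) atTop :=
        (liminf_nat_add (fun n : ℕ => f n ω / n) 1).symm
    _ ≤ liminf (fun n : ℕ => f 1 ω / n + f n (T ω) / n) atTop := by
      refine liminf_le_liminf (.of_forall fun n => ?_)
      rw [← ENNReal.add_div, add_comm n]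
      gcongr
      · exact h.apply_add_le 1 n ω
      · omega
    _ = lowerGrowth f (T ω) :=
      ENNReal.liminf_add_of_left_tendsto_zero (tendsto_const_div_natCast hω) _

end IsSubadditiveCocycle

theorem ae_forall_iterate_eq_of_ae_le_comp [MeasurableSpace Ω] {P : Measure Ω}
    (hT : MeasurePreserving T P P) (hg : Measurable g) (hint : ∫⁻ ω, g ω ∂P ≠ ∞)
    (hle : g ≤ᵐ[P] g ∘ T) : ∀ᵐ ω ∂P, ∀ i, g (T^[i] ω) = g ω := by
  have heq : g =ᵐ[P] g ∘ T :=
    ae_eq_of_ae_le_of_lintegral_le hle hint (hg.comp hT.measurable).aemeasurable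
      (hT.lintegral_comp hg).le
  rw [ae_all_iff]
  intro i
  induction i with
  | zero => exact ae_of_all _ fun ω => rfl
  | succ i ih =>
    filter_upwards [ih, (hT.iterate i).quasiMeasurePreserving.ae heq] with ω hi hstep
    rw [Function.iterate_succ_apply', ← hi]
    exact hstep.symm

end Cocycle

section Ergodic

variable {Ω : Type*} [MeasurableSpace Ω] {P : Measure Ω} {T : Ω → Ω} {f : ℕ → Ω → ℝ≥0∞}
  {g : Ω → ℝ≥0∞}

theorem measurable_birkhoffSum (hT : Measurable T) (hg : Measurable g) (n : ℕ) :
    Measurable (birkhoffSum T g n) :=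
  Finset.measurable_fun_sum _ fun i _ => hg.comp (hT.iterate i)

theorem lintegral_sum_comp_iterate (hT : MeasurePreserving T P P) (hg : Measurable g)
    (s : Finset ℕ) : ∫⁻ ω, ∑ i ∈ s, g (T^[i] ω) ∂P = s.card * ∫⁻ ω, g ω ∂P := by
  have hmeas (i : ℕ) : Measurable fun ω => g (T^[i] ω) := hg.comp (hT.measurable.iterate i)
  rw [lintegral_finsetSum _ fun i _ => hmeas i]
  simp [(hT.iterate _).lintegral_comp hg]

theorem lintegral_birkhoffSum (hT : MeasurePreserving T P P) (hg : Measurable g) (n : ℕ) :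
    ∫⁻ ω, birkhoffSum T g n ω ∂P = n * ∫⁻ ω, g ω ∂P := by
  simpa [birkhoffSum] using lintegral_sum_comp_iterate hT hg (Finset.range n)

theorem timeConstant_birkhoffSum (hT : MeasurePreserving T P P) (hg : Measurable g) :
    timeConstant P (birkhoffSum T g) = ∫⁻ ω, g ω ∂P := by
  refine le_antisymm (by simpa using timeConstant_le (P := P) (f := birkhoffSum T g) le_rfl)
    (le_iInf fun ⟨n, hn⟩ => ?_)
  rw [lintegral_birkhoffSum hT hg, mul_comm,
    ENNReal.mul_div_cancel_right (by simp; omega) (by simp)]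

theorem sub_lintegral_le_timeConstant (hT : MeasurePreserving T P P) (hg : Measurable g)
    (M : ℝ≥0∞) :
    M * P Set.univ - ∫⁻ ω, g ω ∂P ≤ timeConstant P fun n ω => n * M - birkhoffSum T g n ω := by
  refine le_iInf fun ⟨n, hn⟩ => ?_
  rw [ENNReal.le_div_iff_mul_le (.inl (by simp; omega)) (.inl (by simp)), mul_comm]
  calc n * (M * P Set.univ - ∫⁻ ω, g ω ∂P)
      = ∫⁻ _, n * M ∂P - ∫⁻ ω, birkhoffSum T g n ω ∂P := by
        rw [ENNReal.mul_sub fun _ _ => ENNReal.natCast_ne_top n, lintegral_const,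
          lintegral_birkhoffSum hT hg, mul_assoc]
    _ ≤ ∫⁻ ω, (n * M - birkhoffSum T g n ω) ∂P :=
        lintegral_sub_le _ _ (measurable_birkhoffSum hT.measurable hg n)

namespace IsSubadditiveCocycle

theorem lintegral_le_mul (h : IsSubadditiveCocycle T f) (hT : MeasurePreserving T P P)
    (h1 : Measurable (f 1)) (n : ℕ) : ∫⁻ ω, f n ω ∂P ≤ n * ∫⁻ ω, f 1 ω ∂P := by
  rw [← lintegral_birkhoffSum hT h1]
  exact lintegral_mono fun ω => h.le_birkhoffSum n ω

theorem lintegral_lowerGrowth_le (h : IsSubadditiveCocycle T f) (hT : MeasurePreserving T P P)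
    (hf : ∀ n, Measurable (f n)) : ∫⁻ ω, lowerGrowth f ω ∂P ≤ ∫⁻ ω, f 1 ω ∂P := by
  refine (lintegral_liminf_le fun n => (hf n).div_const _).trans
    (liminf_le_of_frequently_le' (.of_forall fun n => ?_))
  calc ∫⁻ ω, f n ω / n ∂P = (∫⁻ ω, f n ω ∂P) / n := by
        simp only [div_eq_mul_inv]
        exact lintegral_mul_const _ (hf n)
    _ ≤ ∫⁻ ω, f 1 ω ∂P := by
        exact ENNReal.div_le_of_le_mul' (h.lintegral_le_mul hT (hf 1) n)

theorem lintegral_lowerGrowth_ne_top (h : IsSubadditiveCocycle T f)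
    (hT : MeasurePreserving T P P) (hf : ∀ n, Measurable (f n)) (hint : ∫⁻ ω, f 1 ω ∂P ≠ ∞) :
    ∫⁻ ω, lowerGrowth f ω ∂P ≠ ∞ :=
  ne_top_of_le_ne_top hint (h.lintegral_lowerGrowth_le hT hf)

theorem ae_forall_lowerGrowth_iterate_eq (h : IsSubadditiveCocycle T f)
    (hT : MeasurePreserving T P P) (hf : ∀ n, Measurable (f n)) (hint : ∫⁻ ω, f 1 ω ∂P ≠ ∞) :
    ∀ᵐ ω ∂P, ∀ i, lowerGrowth f (T^[i] ω) = lowerGrowth f ω := by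
  refine ae_forall_iterate_eq_of_ae_le_comp hT (measurable_lowerGrowth hf)
    (h.lintegral_lowerGrowth_ne_top hT hf hint) ?_
  filter_upwards [ae_lt_top (hf 1) hint] with ω hω
  exact h.lowerGrowth_le_lowerGrowth_comp hω.ne

theorem lintegral_le_of_ae_invariant (h : IsSubadditiveCocycle T f)
    (hT : MeasurePreserving T P P) (hf : ∀ n, Measurable (f n)) {c : Ω → ℝ≥0∞}
    (hc : Measurable c) (hinv : ∀ᵐ ω ∂P, ∀ i, c (T^[i] ω) = c ω) (K n : ℕ) :
    ∫⁻ ω, f n ω ∂P ≤ n * (∫⁻ ω, c ω ∂P + ∫⁻ ω in slowSet f c K, f 1 ω ∂P)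
      + K * ∫⁻ ω, f 1 ω ∂P := by
  have hslow : MeasurableSet (slowSet f c K) := measurableSet_slowSet hf hc K
  have hbad : Measurable ((slowSet f c K).indicator (f 1)) := (hf 1).indicator hslow
  have hcost : Measurable fun ω =>
      n * c ω + birkhoffSum T ((slowSet f c K).indicator (f 1)) n ω :=
    (hc.const_mul _).add (measurable_birkhoffSum hT.measurable hbad n)
  calc ∫⁻ ω, f n ω ∂P
      ≤ ∫⁻ ω, (n * c ω + birkhoffSum T ((slowSet f c K).indicator (f 1)) n ω
          + ∑ i ∈ Finset.Ico (n - K) n, f 1 (T^[i] ω)) ∂P :=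
        lintegral_mono_ae (hinv.mono fun ω hω => h.le_mul_add_birkhoffSum_slowSet hω K n)
    _ = n * (∫⁻ ω, c ω ∂P + ∫⁻ ω in slowSet f c K, f 1 ω ∂P)
          + (n - (n - K) : ℕ) * ∫⁻ ω, f 1 ω ∂P := by
        rw [lintegral_add_left hcost,
          lintegral_add_left (hc.const_mul _), lintegral_const_mul _ hc,
          lintegral_birkhoffSum hT hbad, lintegral_indicator hslow,
          lintegral_sum_comp_iterate hT (hf 1), Nat.card_Ico, mul_add]
    _ ≤ _ := by
        gcongr
        omega

end IsSubadditiveCocycle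

theorem lintegral_lowerGrowth_birkhoffSum_le (hT : MeasurePreserving T P P)
    (hg : Measurable g) :
    ∫⁻ ω, lowerGrowth (birkhoffSum T g) ω ∂P ≤ ∫⁻ ω, g ω ∂P := by
  simpa using isSubadditiveCocycle_birkhoffSum.lintegral_lowerGrowth_le hT
    (measurable_birkhoffSum hT.measurable hg)

theorem ae_lowerGrowth_birkhoffSum_ne_top (hT : MeasurePreserving T P P) (hg : Measurable g)
    (hint : ∫⁻ ω, g ω ∂P ≠ ∞) : ∀ᵐ ω ∂P, lowerGrowth (birkhoffSum T g) ω ≠ ∞ :=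
  (ae_lt_top (measurable_lowerGrowth (measurable_birkhoffSum hT.measurable hg))
    (ne_top_of_le_ne_top hint (lintegral_lowerGrowth_birkhoffSum_le hT hg))).mono
    fun _ hω => hω.ne

variable [IsFiniteMeasure P]

theorem IsSubadditiveCocycle.timeConstant_le_lintegral_lowerGrowth (h : IsSubadditiveCocycle T f)
    (hT : MeasurePreserving T P P) (hf : ∀ n, Measurable (f n)) (hint : ∫⁻ ω, f 1 ω ∂P ≠ ∞) :
    timeConstant P f ≤ ∫⁻ ω, lowerGrowth f ω ∂P := by
  have hslack (ε : ℝ≥0∞) (hε : ε ≠ 0) :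
      timeConstant P f ≤ ∫⁻ ω, (lowerGrowth f ω + ε) ∂P := by
    have hmeas : Measurable fun ω => lowerGrowth f ω + ε :=
      (measurable_lowerGrowth hf).add_const ε
    have hinv : ∀ᵐ ω ∂P, ∀ i, lowerGrowth f (T^[i] ω) + ε = lowerGrowth f ω + ε :=
      (h.ae_forall_lowerGrowth_iterate_eq hT hf hint).mono fun ω hω i => by rw [hω]
    have hK (K : ℕ) : timeConstant P f ≤ ∫⁻ ω, (lowerGrowth f ω + ε) ∂P
        + ∫⁻ ω in slowSet f (fun ω => lowerGrowth f ω + ε) K, f 1 ω ∂P :=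
      le_of_forall_natCast_mul_le (ENNReal.mul_ne_top (ENNReal.natCast_ne_top K) hint) fun n =>
        (natCast_mul_timeConstant_le n).trans (h.lintegral_le_of_ae_invariant hT hf hmeas hinv K n)
    simpa using ge_of_tendsto'
      (tendsto_const_nhds.add (tendsto_setLIntegral_slowSet hf hint hε)) hK
  refine le_of_forall_natCast_mul_le (measure_ne_top P Set.univ) fun n => ?_
  rcases eq_or_ne n 0 with rfl | hn
  · simp
  calc n * timeConstant P f
      ≤ n * ∫⁻ ω, (lowerGrowth f ω + (n : ℝ≥0∞)⁻¹) ∂P := by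
        gcongr
        exact hslack _ (ENNReal.inv_ne_zero.2 (ENNReal.natCast_ne_top n))
    _ = n * ∫⁻ ω, lowerGrowth f ω ∂P + P Set.univ := by
        rw [lintegral_add_right _ measurable_const, lintegral_const, mul_add, ← mul_assoc,
          ENNReal.mul_inv_cancel (by simpa using hn) (ENNReal.natCast_ne_top n), one_mul]

/-- This is the lower bound for the cocycle `(n * M - Sₙ)⁺`, which is subadditive because `Sₙ` is
additive. -/
theorem lintegral_min_upperGrowth_birkhoffSum_le (hT : MeasurePreserving T P P)
    (hg : Measurable g) {M : ℝ≥0∞} (hM : M ≠ ∞) :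
    ∫⁻ ω, min M (upperGrowth (birkhoffSum T g) ω) ∂P ≤ ∫⁻ ω, g ω ∂P := by
  have hS : ∀ n, Measurable (birkhoffSum T g n) := measurable_birkhoffSum hT.measurable hg
  have hmin : Measurable fun ω => min M (upperGrowth (birkhoffSum T g) ω) :=
    measurable_const.min (measurable_upperGrowth hS)
  have htop : M * P Set.univ ≠ ∞ := ENNReal.mul_ne_top hM (measure_ne_top _ _)
  have hbound : ∫⁻ ω, (M - upperGrowth (birkhoffSum T g) ω) ∂P ≤ M * P Set.univ := by
    rw [← lintegral_const]
    exact lintegral_mono fun ω => tsub_le_self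
  have hint : ∫⁻ ω, ((1 : ℕ) * M - birkhoffSum T g 1 ω) ∂P ≠ ∞ := by
    refine ne_top_of_le_ne_top htop ?_
    rw [← lintegral_const]
    exact lintegral_mono fun ω => by simp
  have hlower : M * P Set.univ - ∫⁻ ω, g ω ∂P ≤
      ∫⁻ ω, (M - upperGrowth (birkhoffSum T g) ω) ∂P := by
    simpa only [lowerGrowth_mul_sub hM] using (sub_lintegral_le_timeConstant hT hg M).trans
      ((isSubadditiveCocycle_mul_sub_birkhoffSum M).timeConstant_le_lintegral_lowerGrowth hT
        (fun n => measurable_const.sub (hS n)) hint)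
  refine ENNReal.le_of_add_le_add_left (ne_top_of_le_ne_top htop hbound) ?_
  calc ∫⁻ ω, (M - upperGrowth (birkhoffSum T g) ω) ∂P
        + ∫⁻ ω, min M (upperGrowth (birkhoffSum T g) ω) ∂P
      = M * P Set.univ := by
        rw [← lintegral_add_right _ hmin]
        simp only [tsub_add_min, lintegral_const]
    _ ≤ _ := tsub_le_iff_right.1 hlower

theorem lintegral_upperGrowth_birkhoffSum_le (hT : MeasurePreserving T P P)
    (hg : Measurable g) :
    ∫⁻ ω, upperGrowth (birkhoffSum T g) ω ∂P ≤ ∫⁻ ω, g ω ∂P := by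
  have hmeas := measurable_upperGrowth (measurable_birkhoffSum hT.measurable hg)
  calc ∫⁻ ω, upperGrowth (birkhoffSum T g) ω ∂P
      = ∫⁻ ω, ⨆ M : ℕ, min (M : ℝ≥0∞) (upperGrowth (birkhoffSum T g) ω) ∂P := by
        simp only [← iSup_inf_eq, ENNReal.iSup_natCast, top_inf_eq]
    _ = ⨆ M : ℕ, ∫⁻ ω, min (M : ℝ≥0∞) (upperGrowth (birkhoffSum T g) ω) ∂P :=
        lintegral_iSup (fun M => measurable_const.min hmeas)
          fun M N hMN ω => min_le_min_right _ (by exact_mod_cast hMN)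
    _ ≤ ∫⁻ ω, g ω ∂P :=
        iSup_le fun M => lintegral_min_upperGrowth_birkhoffSum_le hT hg (ENNReal.natCast_ne_top M)

theorem ae_tendsto_birkhoffSum_div (hT : MeasurePreserving T P P) (hg : Measurable g)
    (hint : ∫⁻ ω, g ω ∂P ≠ ∞) :
    ∀ᵐ ω ∂P, Tendsto (fun n : ℕ => birkhoffSum T g n ω / n) atTop
      (𝓝 (lowerGrowth (birkhoffSum T g) ω)) := by
  have hS : ∀ n, Measurable (birkhoffSum T g n) := measurable_birkhoffSum hT.measurable hg
  have h1 : ∫⁻ ω, birkhoffSum T g 1 ω ∂P = ∫⁻ ω, g ω ∂P := by simp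
  have hcocycle : IsSubadditiveCocycle T (birkhoffSum T g) := isSubadditiveCocycle_birkhoffSum
  refine ae_tendsto_of_lintegral_upperGrowth_le hS
    (hcocycle.lintegral_lowerGrowth_ne_top hT hS (h1.trans_ne hint)) ?_
  calc ∫⁻ ω, upperGrowth (birkhoffSum T g) ω ∂P ≤ ∫⁻ ω, g ω ∂P :=
        lintegral_upperGrowth_birkhoffSum_le hT hg
    _ = timeConstant P (birkhoffSum T g) := (timeConstant_birkhoffSum hT hg).symm
    _ ≤ _ := hcocycle.timeConstant_le_lintegral_lowerGrowth hT hS (h1.trans_ne hint)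

namespace IsSubadditiveCocycle

theorem lintegral_upperGrowth_le (h : IsSubadditiveCocycle T f) (hT : MeasurePreserving T P P)
    (hf : ∀ n, Measurable (f n)) (hint : ∫⁻ ω, f 1 ω ∂P ≠ ∞) {m : ℕ} (hm : m ≠ 0) :
    ∫⁻ ω, upperGrowth f ω ∂P ≤ (∫⁻ ω, f m ω ∂P) / m := by
  have hTm : MeasurePreserving T^[m] P P := hT.iterate m
  have hintm : ∫⁻ ω, f m ω ∂P ≠ ∞ :=
    ne_top_of_le_ne_top (ENNReal.mul_ne_top (ENNReal.natCast_ne_top m) hint)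
      (h.lintegral_le_mul hT (hf 1) m)
  calc ∫⁻ ω, upperGrowth f ω ∂P
      ≤ ∫⁻ ω, lowerGrowth (birkhoffSum T^[m] (f m)) ω / m ∂P := by
        refine lintegral_mono_ae ?_
        filter_upwards [ae_tendsto_birkhoffSum_div hT (hf 1) hint,
          ae_tendsto_birkhoffSum_div hTm (hf m) hintm,
          ae_lowerGrowth_birkhoffSum_ne_top hT (hf 1) hint,
          ae_lowerGrowth_birkhoffSum_ne_top hTm (hf m) hintm] with ω h1 hblock ha hb
        exact h.upperGrowth_le_of_tendsto hm ha hb h1 hblock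
    _ = (∫⁻ ω, lowerGrowth (birkhoffSum T^[m] (f m)) ω ∂P) / m := by
        simp only [div_eq_mul_inv]
        exact lintegral_mul_const _
          (measurable_lowerGrowth (measurable_birkhoffSum hTm.measurable (hf m)))
    _ ≤ (∫⁻ ω, f m ω ∂P) / m := by
        exact ENNReal.div_le_div_right (lintegral_lowerGrowth_birkhoffSum_le hTm (hf m)) _

theorem lintegral_upperGrowth_le_timeConstant (h : IsSubadditiveCocycle T f)
    (hT : MeasurePreserving T P P) (hf : ∀ n, Measurable (f n)) (hint : ∫⁻ ω, f 1 ω ∂P ≠ ∞) :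
    ∫⁻ ω, upperGrowth f ω ∂P ≤ timeConstant P f :=
  le_iInf fun ⟨_, hm⟩ => h.lintegral_upperGrowth_le hT hf hint (Nat.one_le_iff_ne_zero.1 hm)

theorem ae_tendsto_div_lowerGrowth (h : IsSubadditiveCocycle T f)
    (hT : MeasurePreserving T P P) (hf : ∀ n, Measurable (f n)) (hint : ∫⁻ ω, f 1 ω ∂P ≠ ∞) :
    ∀ᵐ ω ∂P, Tendsto (fun n : ℕ => f n ω / n) atTop (𝓝 (lowerGrowth f ω)) :=
  ae_tendsto_of_lintegral_upperGrowth_le hf (h.lintegral_lowerGrowth_ne_top hT hf hint)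
    ((h.lintegral_upperGrowth_le_timeConstant hT hf hint).trans
      (h.timeConstant_le_lintegral_lowerGrowth hT hf hint))

theorem lintegral_lowerGrowth_eq_timeConstant (h : IsSubadditiveCocycle T f)
    (hT : MeasurePreserving T P P) (hf : ∀ n, Measurable (f n)) (hint : ∫⁻ ω, f 1 ω ∂P ≠ ∞) :
    ∫⁻ ω, lowerGrowth f ω ∂P = timeConstant P f :=
  le_antisymm ((lintegral_mono fun _ => liminf_le_limsup).trans
      (h.lintegral_upperGrowth_le_timeConstant hT hf hint))
    (h.timeConstant_le_lintegral_lowerGrowth hT hf hint)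

theorem ae_tendsto_div_timeConstant {P : Measure Ω} [IsProbabilityMeasure P]
    (h : IsSubadditiveCocycle T f) (hT : Ergodic T P) (hf : ∀ n, Measurable (f n))
    (hint : ∫⁻ ω, f 1 ω ∂P ≠ ∞) :
    ∀ᵐ ω ∂P, Tendsto (fun n : ℕ => f n ω / n) atTop (𝓝 (timeConstant P f)) := by
  have hmp : MeasurePreserving T P P := hT.toMeasurePreserving
  have hinv : lowerGrowth f ∘ T =ᵐ[P] lowerGrowth f :=
    (h.ae_forall_lowerGrowth_iterate_eq hmp hf hint).mono fun ω hω => hω 1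
  obtain ⟨L, hL⟩ := hT.ae_eq_const_of_ae_eq_comp₀
    (measurable_lowerGrowth hf).nullMeasurable hinv
  have hLP : L = timeConstant P f := by
    rw [← h.lintegral_lowerGrowth_eq_timeConstant hmp hf hint, lintegral_congr_ae hL]
    simp
  filter_upwards [h.ae_tendsto_div_lowerGrowth hmp hf hint, hL] with ω hlim hω
  rwa [hω, Function.const_apply, hLP] at hlim

end IsSubadditiveCocycle

end Ergodic

section Shift

variable {Γ : Type*}

/-- The one-sided shift on sequences, written on increments as `ω ↦ (ω 1, ω 2, …)`. -/
def seqShift (ω : ℕ → Γ) : ℕ → Γ :=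
  fun i => ω (i + 1)

theorem seqShift_iterate_apply (m : ℕ) (ω : ℕ → Γ) (i : ℕ) : seqShift^[m] ω i = ω (i + m) := by
  induction m generalizing ω with
  | zero => rfl
  | succ m ih => rw [Function.iterate_succ_apply, ih, seqShift, add_assoc]

variable [MeasurableSpace Γ]

theorem measurable_seqShift_iterate_iSup_comap (m : ℕ) :
    Measurable[⨆ j ≥ m, MeasurableSpace.comap (fun ω : ℕ → Γ => ω j) ‹_›] seqShift^[m] := by
  refine @measurable_pi_lambda _ _ _ (_) _ _ fun i => ?_
  simp only [seqShift_iterate_apply]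
  exact (comap_measurable fun ω : ℕ → Γ => ω (i + m)).mono
    (le_iSup₂_of_le (i + m) (Nat.le_add_left m i) le_rfl) le_rfl

theorem measurableSet_tail_of_preimage_seqShift_eq {s : Set (ℕ → Γ)} (hs : MeasurableSet s)
    (hinv : seqShift ⁻¹' s = s) :
    MeasurableSet[limsup (fun j => MeasurableSpace.comap (fun ω : ℕ → Γ => ω j) ‹_›) atTop] s := by
  rw [limsup_eq_iInf_iSup_of_nat, MeasurableSpace.measurableSet_iInf]
  intro m
  have hiter : seqShift^[m] ⁻¹' s = s := by
    rw [Set.preimage_iterate_eq]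
    exact Function.iterate_fixed hinv m
  rw [← hiter]
  exact measurable_seqShift_iterate_iSup_comap m hs

variable (μ : Measure Γ) [IsProbabilityMeasure μ]

theorem measurePreserving_seqShift :
    MeasurePreserving seqShift (Measure.infinitePi fun _ : ℕ => μ)
      (Measure.infinitePi fun _ : ℕ => μ) where
  measurable := measurable_pi_lambda _ fun i => measurable_pi_apply (i + 1)
  map_eq := Measure.map_infinitePi_infinitePi_of_inj (P := fun _ : ℕ => μ) (add_left_injective 1)

theorem ergodic_seqShift : Ergodic seqShift (Measure.infinitePi fun _ : ℕ => μ) where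
  toMeasurePreserving := measurePreserving_seqShift μ
  aeconst_set s hs hinv := by
    have hindep : ProbabilityTheory.iIndep
        (fun j => MeasurableSpace.comap (fun ω : ℕ → Γ => ω j) ‹_›)
        (Measure.infinitePi fun _ : ℕ => μ) :=
      ProbabilityTheory.iIndepFun_infinitePi (X := fun _ g => g) fun _ => measurable_id
    rw [eventuallyConst_set', ae_eq_empty, ae_eq_univ_iff_measure_eq hs.nullMeasurableSet,
      measure_univ]
    exact ProbabilityTheory.measure_zero_or_one_of_measurableSet_limsup_atTop
      (fun j => (measurable_pi_apply j).comap_le) hindep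
      (measurableSet_tail_of_preimage_seqShift_eq hs hinv)

end Shift

section RandomWalk

variable {Γ X : Type*}

/-- The position `ω 0 * ⋯ * ω (n - 1)` at time `n` of the random walk with increments `ω`. -/
def randomWalk [Monoid Γ] (n : ℕ) (ω : ℕ → Γ) : Γ :=
  ((List.range n).map ω).prod

section Monoid

variable [Monoid Γ]

theorem randomWalk_add (m n : ℕ) (ω : ℕ → Γ) :
    randomWalk (m + n) ω = randomWalk m ω * randomWalk n (seqShift^[m] ω) := by
  have hshift : seqShift^[m] ω = ω ∘ (m + ·) := by
    ext i
    rw [seqShift_iterate_apply, Function.comp_apply, add_comm]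
  rw [hshift, randomWalk, List.range_add, List.map_append, List.prod_append, List.map_map]
  rfl

theorem measurable_randomWalk [MeasurableSpace Γ] [MeasurableMul₂ Γ] (n : ℕ) :
    Measurable (randomWalk n : (ℕ → Γ) → Γ) := by
  induction n with
  | zero => exact measurable_const
  | succ n ih =>
    have hsucc : (randomWalk (n + 1) : (ℕ → Γ) → Γ) = fun ω => randomWalk n ω * ω n :=
      funext fun ω => List.prod_range_succ ω n
    rw [hsucc]
    exact ih.mul (measurable_pi_apply n)

variable [PseudoMetricSpace X] [MulAction Γ X]

theorem isSubadditiveCocycle_dist_randomWalk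
    (hact : ∀ (g : Γ) (y z : X), dist (g • y) (g • z) ≤ dist y z) (o : X) :
    IsSubadditiveCocycle seqShift fun n (ω : ℕ → Γ) =>
      ENNReal.ofReal (dist (randomWalk n ω • o) o) where
  apply_zero ω := by simp [randomWalk]
  apply_add_le m n ω := by
    rw [← ENNReal.ofReal_add dist_nonneg dist_nonneg]
    refine ENNReal.ofReal_le_ofReal ?_
    calc dist (randomWalk (m + n) ω • o) o
        = dist (randomWalk m ω • randomWalk n (seqShift^[m] ω) • o) o := by
          rw [randomWalk_add, mul_smul]
      _ ≤ dist (randomWalk m ω • randomWalk n (seqShift^[m] ω) • o) (randomWalk m ω • o)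
          + dist (randomWalk m ω • o) o := dist_triangle _ _ _
      _ ≤ dist (randomWalk m ω • o) o + dist (randomWalk n (seqShift^[m] ω) • o) o := by
          rw [add_comm]
          gcongr
          exact hact _ _ _

end Monoid

theorem drift_exists_general [Monoid Γ] [MeasurableSpace Γ] [MeasurableMul₂ Γ]
    [PseudoMetricSpace X] [MulAction Γ X]
    (hact : ∀ (g : Γ) (y z : X), dist (g • y) (g • z) ≤ dist y z) (o : X)
    (hmeas : Measurable fun g : Γ => dist (g • o) o) (μ : Measure Γ) [IsProbabilityMeasure μ]
    (hmom : ∫⁻ g, ENNReal.ofReal (dist (g • o) o) ∂μ ≠ ∞) :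
    timeConstant (Measure.infinitePi fun _ : ℕ => μ)
        (fun n ω => ENNReal.ofReal (dist (randomWalk n ω • o) o)) ≠ ∞ ∧
      ∀ᵐ ω ∂Measure.infinitePi fun _ : ℕ => μ,
        Tendsto (fun n : ℕ => dist (randomWalk n ω • o) o / n) atTop
          (𝓝 (timeConstant (Measure.infinitePi fun _ : ℕ => μ)
            fun n ω => ENNReal.ofReal (dist (randomWalk n ω • o) o)).toReal) := by
  let f (n : ℕ) (ω : ℕ → Γ) : ℝ≥0∞ := ENNReal.ofReal (dist (randomWalk n ω • o) o)
  have hf (n : ℕ) : Measurable (f n) := (hmeas.comp (measurable_randomWalk n)).ennreal_ofReal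
  have hint : ∫⁻ ω, f 1 ω ∂Measure.infinitePi (fun _ : ℕ => μ) ≠ ∞ := by
    rw [← Measure.infinitePi_map_eval (fun _ : ℕ => μ) 0,
      lintegral_map hmeas.ennreal_ofReal (measurable_pi_apply 0)] at hmom
    simpa [f, randomWalk] using hmom
  have hfin : timeConstant (Measure.infinitePi fun _ : ℕ => μ) f ≠ ∞ := timeConstant_ne_top hint
  refine ⟨hfin, ?_⟩
  filter_upwards [(isSubadditiveCocycle_dist_randomWalk hact o).ae_tendsto_div_timeConstant
    (ergodic_seqShift μ) hf hint] with ω hω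
  simpa [Function.comp_def, ENNReal.toReal_div] using (ENNReal.tendsto_toReal hfin).comp hω

end RandomWalk

/-- for a random walk with finite first moment on a group acting by isometries
on a metric space, the drift `λ = inf_n (1/n) E[d(Zₙ o, o)]` is finite and almost surely
`d(Zₙ(ω) o, o)/n → λ`. -/
theorem drift_exists
    {Γ : Type*} [Group Γ] [Countable Γ] [MeasurableSpace Γ] [MeasurableSingletonClass Γ]
    {X : Type*} [MetricSpace X] [MulAction Γ X]
    (hiso : ∀ (g : Γ) (y z : X), dist (g • y) (g • z) = dist y z)
    (o : X) (μ : Measure Γ) [IsProbabilityMeasure μ]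
    (hmom : ∑' g : Γ, μ {g} * ENNReal.ofReal (dist (g • o) o) ≠ ⊤)
    (ℙ : Measure (ℕ → Γ)) [IsProbabilityMeasure ℙ]
    (hℙ : ∀ (s : Finset ℕ) (B : ℕ → Set Γ),
      ℙ {ω | ∀ i ∈ s, ω i ∈ B i} = ∏ i ∈ s, μ (B i)) :
    ∃ lam : ENNReal,
      lam = ⨅ n : {n : ℕ // 1 ≤ n},
        (∫⁻ ω, ENNReal.ofReal (dist ((((List.range (n : ℕ)).map ω).prod) • o) o) ∂ℙ)
          / (n : ℕ) ∧
      lam ≠ ⊤ ∧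
      ∀ᵐ ω ∂ℙ, Tendsto
        (fun n : ℕ => dist ((((List.range n).map ω).prod) • o) o / n)
        atTop (𝓝 lam.toReal) := by
  obtain rfl : ℙ = Measure.infinitePi fun _ => μ := Measure.eq_infinitePi _ fun s t _ => hℙ s t
  exact ⟨_, rfl, drift_exists_general (fun g y z => (hiso g y z).le) o .of_discrete μ
    (by simpa only [lintegral_countable', mul_comm] using hmom)⟩
end

section
/- Let H be a set, c a natural number, and A_n, B_n, A, B subsets of H (n ∈ ℕ). Assume: (i) for every n, the symmetric difference A_n Δ B_n is finite with at most c elements; (ii) A_n converges to A pointwise, i.e. for every h ∈ H there is N such that for all n ≥ N, h ∈ A_n if and only if h ∈ A; (iii) B is a cluster point of (B_n) in the product topology, i.e. for every finite subset F ⊆ H and every N there exists n ≥ N such that for all h ∈ F, h ∈ B_n if and only if h ∈ B. Then the symmetric difference A Δ B is finite with at most c elements. -/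
/-!
Cardinality is lower semicontinuous for pointwise convergence of sets: it is the supremum of the
cardinalities of finite subsets, and each finite subset of a cluster point lies in frequently many
of the sets. On a finite set, pointwise convergence `A i → A₀` is eventual equality, so it holds
simultaneously with the frequent agreement of `B i` and `B₀`; thus `A₀ ∆ B₀` is a cluster point of
`A i ∆ B i`.
-/

open Filter
open scoped symmDiff

section

variable {ι H : Type*} {l : Filter ι}

theorem encard_le_iff_forall_finset_card_le {s : Set H} {c : ℕ∞} :
    s.encard ≤ c ↔ ∀ F : Finset H, ↑F ⊆ s → (F.card : ℕ∞) ≤ c := by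
  constructor
  · intro hs F hF
    calc (F.card : ℕ∞) = (F : Set H).encard := (Set.encard_coe_eq_coe_finsetCard F).symm
      _ ≤ s.encard := Set.encard_le_encard hF
      _ ≤ c := hs
  · refine fun h ↦ ENat.forall_natCast_le_iff_le.mp fun n hn ↦ ?_
    obtain ⟨t, hts, ht⟩ := Set.exists_subset_encard_eq hn
    lift t to Finset H using Set.finite_of_encard_eq_coe ht
    rw [← ht, Set.encard_coe_eq_coe_finsetCard]
    exact h t hts

theorem encard_le_of_forall_finset_frequently_subset {S : ι → Set H} {S₀ : Set H} {c : ℕ∞}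
    (hc : ∀ᶠ i in l, (S i).encard ≤ c)
    (hS : ∀ F : Finset H, ↑F ⊆ S₀ → ∃ᶠ i in l, ↑F ⊆ S i) : S₀.encard ≤ c := by
  refine encard_le_iff_forall_finset_card_le.mpr fun F hF ↦ ?_
  obtain ⟨i, hFi, hci⟩ := ((hS F hF).and_eventually hc).exists
  exact encard_le_iff_forall_finset_card_le.mp hci F hFi

theorem frequently_forall_mem_symmDiff_iff {A B : ι → Set H} {A₀ B₀ : Set H} {F : Finset H}
    (hA : ∀ h ∈ F, ∀ᶠ i in l, (h ∈ A i ↔ h ∈ A₀))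
    (hB : ∃ᶠ i in l, ∀ h ∈ F, (h ∈ B i ↔ h ∈ B₀)) :
    ∃ᶠ i in l, ∀ h ∈ F, (h ∈ A i ∆ B i ↔ h ∈ A₀ ∆ B₀) := by
  have hAF : ∀ᶠ i in l, ∀ h ∈ F, (h ∈ A i ↔ h ∈ A₀) := F.eventually_all.mpr hA
  refine (hB.and_eventually hAF).mono fun i ⟨hBi, hAi⟩ h hF ↦ ?_
  simp only [Set.mem_symmDiff, hAi h hF, hBi h hF]

theorem symmDiff_le_of_cluster_general {A B : ι → Set H} {A₀ B₀ : Set H} {c : ℕ∞}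
    (hc : ∀ᶠ i in l, (A i ∆ B i).encard ≤ c)
    (hA : ∀ h, ∀ᶠ i in l, (h ∈ A i ↔ h ∈ A₀))
    (hB : ∀ F : Finset H, ∃ᶠ i in l, ∀ h ∈ F, (h ∈ B i ↔ h ∈ B₀)) :
    (A₀ ∆ B₀).encard ≤ c := by
  refine encard_le_of_forall_finset_frequently_subset hc fun F hF ↦ ?_
  exact (frequently_forall_mem_symmDiff_iff (fun h _ ↦ hA h) (hB F)).mono
    fun i hi h hh ↦ (hi h hh).mpr (hF hh)

end

/-- if `Aₙ Δ Bₙ` has at most `c` elements for every `n`, `Aₙ → A` pointwise and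
`B` is a cluster point of `(Bₙ)` in the product topology, then `A Δ B` has at most `c`
elements. -/
theorem symmDiff_le_of_cluster
    {H : Type*} (c : ℕ) (A B : ℕ → Set H) (A₀ B₀ : Set H)
    (hfin : ∀ n, (symmDiff (A n) (B n)).Finite ∧ (symmDiff (A n) (B n)).ncard ≤ c)
    (hA : ∀ h : H, ∃ N : ℕ, ∀ n ≥ N, (h ∈ A n ↔ h ∈ A₀))
    (hB : ∀ (F : Finset H) (N : ℕ), ∃ n ≥ N, ∀ h ∈ F, (h ∈ B n ↔ h ∈ B₀)) :
    (symmDiff A₀ B₀).Finite ∧ (symmDiff A₀ B₀).ncard ≤ c := by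
  simp only [← Set.encard_le_coe_iff_finite_ncard_le] at hfin ⊢
  exact symmDiff_le_of_cluster_general (.of_forall hfin)
    (fun h ↦ eventually_atTop.mpr (hA h)) (fun F ↦ frequently_atTop.mpr (hB F))
end

section
/- Let V be a set and ℌ a halfspace system on V. Let (h_n)_{n∈ℕ} be a strictly descending chain in ℌ and let k ∈ ℌ satisfy k ∩ h_n ≠ ∅ for all n. Then one of the following holds: (a) there is an N such that k is transverse to h_n for all n ≥ N; or (b) there is an N such that h_n ⊆ k for all n ≥ N. Moreover, if the sequence (h_n) is pairwise strongly separated, then case (b) holds. -/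
/-!
By interval-finiteness no halfspace lies in every `h n`: the interval from it to one `h n` would
contain all later ones, but a finite nonempty family has a minimal member while the chain has none.
Applied to `k` and `kᶜ`, this makes two of the four corners of `k` and `h n` eventually nonempty;
the corner `k ∩ h n` is nonempty by assumption, and the last one, `kᶜ ∩ h n`, is nonempty unless
`h n ⊆ k`. In the transverse case `k` is transverse to two distinct members of the chain, which
strong separation forbids.
-/

/-- Two subsets `h, k` of `V` are transverse if the four "corners" are all nonempty. -/
def Transverse {V : Type*} (h k : Set V) : Prop :=
  (h ∩ k).Nonempty ∧ (h ∩ kᶜ).Nonempty ∧ (hᶜ ∩ k).Nonempty ∧ (hᶜ ∩ kᶜ).Nonempty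

/-- A halfspace system on `V`: a family of subsets closed under complementation and
interval-finite. -/
structure HalfspaceSystem (V : Type*) where
  carrier : Set (Set V)
  compl_mem : ∀ h ∈ carrier, hᶜ ∈ carrier
  intervalFinite : ∀ h ∈ carrier, ∀ k ∈ carrier, h ⊆ k →
    {m ∈ carrier | h ⊆ m ∧ m ⊆ k}.Finite

/-- Two halfspaces are strongly separated if no member of the system is transverse to both. -/
def StronglySeparated {V : Type*} (ℌ : HalfspaceSystem V) (h k : Set V) : Prop :=
  ∀ m ∈ ℌ.carrier, ¬(Transverse m h ∧ Transverse m k)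

open Filter Set

theorem not_bddBelow_range_of_strictAnti {ι α : Type*} [PartialOrder ι] [Nonempty ι] [NoMaxOrder ι]
    [Preorder α] (hfin : ∀ a b : α, (Icc a b).Finite) {f : ι → α} (hf : StrictAnti f) :
    ¬BddBelow (range f) := by
  rintro ⟨a, ha⟩
  obtain ⟨i₀⟩ := ‹Nonempty ι›
  have himage : f '' Ici i₀ ⊆ Icc a (f i₀) := by
    rintro _ ⟨i, hi, rfl⟩
    exact ⟨ha (mem_range_self i), hf.antitone hi⟩
  obtain ⟨_, ⟨i, hi, rfl⟩, hmin⟩ :=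
    ((hfin a (f i₀)).subset himage).exists_minimal (nonempty_Ici.image f)
  obtain ⟨j, hij⟩ := exists_gt i
  have hle : f i ≤ f j := hmin (mem_image_of_mem f (le_trans hi hij.le)) (hf hij).le
  exact (hf hij).not_ge hle

theorem transverse_iff_not_subset {V : Type*} {h k : Set V} :
    Transverse h k ↔ (h ∩ k).Nonempty ∧ ¬h ⊆ k ∧ ¬k ⊆ h ∧ ¬hᶜ ⊆ k := by
  rw [Transverse, inter_comm hᶜ k]
  simp only [inter_compl_nonempty_iff]

namespace HalfspaceSystem

variable {ι V : Type*} (ℌ : HalfspaceSystem V) {h : ι → Set V} {k : Set V}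

theorem finite_Icc (a b : ℌ.carrier) : (Icc a b).Finite := by
  by_cases hab : a ≤ b
  · refine ((ℌ.intervalFinite a a.2 b b.2 hab).preimage Subtype.val_injective.injOn).subset ?_
    exact fun m hm => ⟨m.2, hm⟩
  · simp only [Icc_eq_empty hab, finite_empty]

section StrictAnti

variable [PartialOrder ι] [Nonempty ι] [NoMaxOrder ι]

theorem exists_not_subset_of_strictAnti (hmem : ∀ n, h n ∈ ℌ.carrier) (hanti : StrictAnti h)
    (hk : k ∈ ℌ.carrier) : ∃ n, ¬k ⊆ h n := by
  by_contra! hsub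
  let f : ι → ℌ.carrier := fun n => ⟨h n, hmem n⟩
  have hf : StrictAnti f := fun _ _ hij => hanti hij
  exact not_bddBelow_range_of_strictAnti ℌ.finite_Icc hf ⟨⟨k, hk⟩, forall_mem_range.mpr hsub⟩

theorem eventually_not_subset_of_strictAnti [IsDirectedOrder ι] (hmem : ∀ n, h n ∈ ℌ.carrier)
    (hanti : StrictAnti h) (hk : k ∈ ℌ.carrier) : ∀ᶠ n in atTop, ¬k ⊆ h n := by
  obtain ⟨N, hN⟩ := ℌ.exists_not_subset_of_strictAnti hmem hanti hk
  filter_upwards [eventually_ge_atTop N] with n hn hkn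
  exact hN (hkn.trans (hanti.antitone hn))

theorem eventually_transverse_or_eventually_subset [IsDirectedOrder ι]
    (hmem : ∀ n, h n ∈ ℌ.carrier) (hanti : StrictAnti h) (hk : k ∈ ℌ.carrier)
    (hne : ∀ n, (k ∩ h n).Nonempty) :
    (∀ᶠ n in atTop, Transverse k (h n)) ∨ ∀ᶠ n in atTop, h n ⊆ k := by
  by_cases hsub : ∃ N, h N ⊆ k
  · obtain ⟨N, hN⟩ := hsub
    right
    filter_upwards [eventually_ge_atTop N] with n hn
    exact (hanti.antitone hn).trans hN
  · left
    filter_upwards [ℌ.eventually_not_subset_of_strictAnti hmem hanti hk,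
      ℌ.eventually_not_subset_of_strictAnti hmem hanti (ℌ.compl_mem k hk)] with n hkn hkcn
    exact transverse_iff_not_subset.mpr ⟨hne n, hkn, not_exists.mp hsub n, hkcn⟩

end StrictAnti

theorem not_eventually_transverse_of_stronglySeparated [Preorder ι] [Nonempty ι]
    [IsDirectedOrder ι] (hsep : ∀ N, ∃ i ≥ N, ∃ j ≥ N, StronglySeparated ℌ (h i) (h j))
    (hk : k ∈ ℌ.carrier) : ¬∀ᶠ n in atTop, Transverse k (h n) := by
  intro htrans
  obtain ⟨N, hN⟩ := eventually_atTop.mp htrans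
  obtain ⟨i, hi, j, hj, hij⟩ := hsep N
  exact hij k hk ⟨hN i hi, hN j hj⟩

end HalfspaceSystem

theorem descending_chain_dichotomy_general {ι V : Type*} [PartialOrder ι] [Nonempty ι]
    [NoMaxOrder ι] [IsDirectedOrder ι] (ℌ : HalfspaceSystem V) {h : ι → Set V}
    (hmem : ∀ n, h n ∈ ℌ.carrier) (hanti : StrictAnti h) {k : Set V} (hk : k ∈ ℌ.carrier)
    (hne : ∀ n, (k ∩ h n).Nonempty) :
    ((∀ᶠ n in atTop, Transverse k (h n)) ∨ ∀ᶠ n in atTop, h n ⊆ k) ∧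
    ((∀ N, ∃ i ≥ N, ∃ j ≥ N, StronglySeparated ℌ (h i) (h j)) → ∀ᶠ n in atTop, h n ⊆ k) := by
  have hdich := ℌ.eventually_transverse_or_eventually_subset hmem hanti hk hne
  refine ⟨hdich, fun hsep => hdich.resolve_left ?_⟩
  exact ℌ.not_eventually_transverse_of_stronglySeparated hsep hk

/-- if `(hₙ)` is a strictly descending chain in a halfspace system and
`k ∩ hₙ ≠ ∅` for all `n`, then eventually either `k` is transverse to all `hₙ`, or `hₙ ⊆ k`
for all large `n`; and if the chain is pairwise strongly separated, the latter case holds. -/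
theorem descending_chain_dichotomy
    {V : Type*} (ℌ : HalfspaceSystem V)
    (h : ℕ → Set V) (hmem : ∀ n, h n ∈ ℌ.carrier) (hdesc : ∀ n, h (n + 1) ⊂ h n)
    (k : Set V) (hk : k ∈ ℌ.carrier) (hne : ∀ n, (k ∩ h n).Nonempty) :
    ((∃ N, ∀ n ≥ N, Transverse k (h n)) ∨ (∃ N, ∀ n ≥ N, h n ⊆ k)) ∧
    ((∀ i j, i ≠ j → StronglySeparated ℌ (h i) (h j)) → ∃ N, ∀ n ≥ N, h n ⊆ k) := by
  simp only [← eventually_atTop]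
  have hanti : StrictAnti h := strictAnti_nat_of_succ_lt hdesc
  exact (descending_chain_dichotomy_general ℌ hmem hanti hk hne).imp_right fun hsub hsep =>
    hsub fun N => ⟨N, le_rfl, N + 1, N.le_succ, hsep N (N + 1) N.ne_add_one⟩
end
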